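/- Let d ≥ 2, let Σ ⊂ GL_d(ℝ) be a compact subset, and let μ₀ be a Borel probability measure supported in Σ which is quasi-irreducible and satisfies L_1(μ₀) > L_2(μ₀). For a Borel probability measure μ supported in Σ, define φ_μ : ℙ(ℝ^d) → ℝ by φ_μ(v̂) := ∫ log(‖gv‖/‖v‖) dμ(g). Then there exist C > 0, θ > 1 and ε > 0 such that for every Borel probability measure μ supported in Σ with ‖μ − μ₀‖_TV < ε, every n ≥ 1 and every v̂ ∈ ℙ(ℝ^d), |Q_μ^{n+1} φ_μ(v̂) − Q_μ^n φ_μ(v̂)| ≤ C θ^{−n}. -/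

import Mathlib

open MeasureTheory Filter
open scoped LinearAlgebra.Projectivization

noncomputable section

abbrev GLd (d : ℕ) := GL (Fin d) ℝ
abbrev Ed (d : ℕ) := EuclideanSpace ℝ (Fin d)
abbrev Pd (d : ℕ) := ℙ ℝ (Ed d)

variable {d : ℕ}

instance : MeasurableSpace (GLd d) := borel _
instance : BorelSpace (GLd d) := ⟨rfl⟩

instance : TopologicalSpace (Pd d) :=
  (instTopologicalSpaceQuotient : TopologicalSpace (Quotient (projectivizationSetoid ℝ (Ed d))))
instance : MeasurableSpace (Pd d) := borel _
instance : BorelSpace (Pd d) := ⟨rfl⟩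

/-- The continuous linear map on Euclidean space induced by `g ∈ GL_d(ℝ)`. -/
def glCLM (g : GLd d) : Ed d →L[ℝ] Ed d :=
  Matrix.toEuclideanCLM (𝕜 := ℝ) (g : Matrix (Fin d) (Fin d) ℝ)

/-- The operator norm of `g ∈ GL_d(ℝ)`. -/
def gnorm (g : GLd d) : ℝ := ‖glCLM g‖

lemma glCLM_leftInv (g : GLd d) (v : Ed d) : glCLM g⁻¹ (glCLM g v) = v := by
  have h : glCLM (d := d) g⁻¹ * glCLM g = 1 := by
    rw [glCLM, glCLM, ← map_mul]
    norm_cast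
    rw [inv_mul_cancel g]
    exact map_one _
  calc glCLM g⁻¹ (glCLM g v) = (glCLM g⁻¹ * glCLM g) v := rfl
    _ = v := by rw [h]; rfl

lemma glLinear_injective (g : GLd d) : Function.Injective (glCLM g).toLinearMap :=
  Function.LeftInverse.injective (g := (glCLM g⁻¹)) (fun v => glCLM_leftInv g v)

/-- The projective action of `g ∈ GL_d(ℝ)` on `ℙ(ℝ^d)`. -/
def pact (g : GLd d) : Pd d → Pd d :=
  Projectivization.map (glCLM g).toLinearMap (glLinear_injective g)

/-- The projective distance `δ` on `ℙ(ℝ^d)`, computed on representatives. -/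
def pdelta (x y : Pd d) : ℝ :=
  Real.sqrt (‖x.rep‖ ^ 2 * ‖y.rep‖ ^ 2 - (inner ℝ x.rep y.rep : ℝ) ^ 2) /
    (‖x.rep‖ * ‖y.rep‖)

/-- Convolution of two measures on `GL_d(ℝ)`. -/
def mconv (μ ν : Measure (GLd d)) : Measure (GLd d) :=
  (μ.prod ν).map (fun p => p.1 * p.2)

/-- `n`-fold convolution power of a measure on `GL_d(ℝ)`. -/
def mconvN (μ : Measure (GLd d)) : ℕ → Measure (GLd d)
  | 0 => Measure.dirac 1
  | n + 1 => if n = 0 then μ else mconv (mconvN μ n) μ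

/-- The top Lyapunov exponent of a (compactly supported) measure on `GL_d(ℝ)`. -/
def L1 (μ : Measure (GLd d)) : ℝ :=
  limUnder atTop (fun n : ℕ => (n : ℝ)⁻¹ * ∫ g, Real.log (gnorm g) ∂(mconvN μ n))

/-- `N₂ g = s₁(g)s₂(g)`, the product of the two largest singular values. -/
def N2 (g : GLd d) : ℝ :=
  sSup { x | ∃ p q : Ed d, ‖p‖ = 1 ∧ ‖q‖ = 1 ∧ (inner ℝ p q : ℝ) = 0 ∧
    x = Real.sqrt (‖glCLM g p‖ ^ 2 * ‖glCLM g q‖ ^ 2 -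
      (inner ℝ (glCLM g p) (glCLM g q) : ℝ) ^ 2) }

/-- `L₁(μ) + L₂(μ)`. -/
def L12 (μ : Measure (GLd d)) : ℝ :=
  limUnder atTop (fun n : ℕ => (n : ℝ)⁻¹ * ∫ g, Real.log (N2 g) ∂(mconvN μ n))

/-- The second Lyapunov exponent. -/
def L2 (μ : Measure (GLd d)) : ℝ := L12 μ - L1 μ

/-- The top Lyapunov exponent of the restriction of `μ` to an (invariant) subspace `V`. -/
def L1rest (μ : Measure (GLd d)) (V : Submodule ℝ (Ed d)) : ℝ :=
  limUnder atTop (fun n : ℕ => (n : ℝ)⁻¹ *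
    ∫ g, Real.log ‖LinearMap.toContinuousLinearMap ((glCLM g).toLinearMap.domRestrict V)‖
      ∂(mconvN μ n))

/-- Quasi-irreducibility of a measure on `GL_d(ℝ)`. -/
def QuasiIrreducible (μ : Measure (GLd d)) : Prop :=
  ¬ ∃ V : Submodule ℝ (Ed d), V ≠ ⊥ ∧ V ≠ ⊤ ∧
    (∀ᵐ g ∂μ, V.map (glCLM g).toLinearMap = V) ∧ L1rest μ V < L1 μ

/-- Irreducibility of a measure on `GL_d(ℝ)`. -/
def Irred (μ : Measure (GLd d)) : Prop :=
  ¬ ∃ V : Submodule ℝ (Ed d), V ≠ ⊥ ∧ V ≠ ⊤ ∧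
    (∀ᵐ g ∂μ, V.map (glCLM g).toLinearMap = V)

/-- The Markov operator associated with a measure on `GL_d(ℝ)`. -/
def Qop (μ : Measure (GLd d)) (φ : Pd d → ℝ) : Pd d → ℝ :=
  fun v => ∫ g, φ (pact g v) ∂μ

/-- The average `α`-Hölder constant of a measure on `GL_d(ℝ)`. -/
def kalpha (α : ℝ) (μ : Measure (GLd d)) : ℝ :=
  sSup { x | ∃ v₁ v₂ : Pd d, v₁ ≠ v₂ ∧
    x = ∫ g, (pdelta (pact g v₁) (pact g v₂) / pdelta v₁ v₂) ^ α ∂μ }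

/-- The `α`-Hölder seminorm of an observable on `ℙ(ℝ^d)`. -/
def valpha (α : ℝ) (φ : Pd d → ℝ) : ℝ :=
  sSup { x | ∃ v₁ v₂ : Pd d, v₁ ≠ v₂ ∧ x = |φ v₁ - φ v₂| / pdelta v₁ v₂ ^ α }

/-- `φ` is `α`-Hölder: `v_α(φ) < ∞`. -/
def IsHolder (α : ℝ) (φ : Pd d → ℝ) : Prop :=
  BddAbove { x | ∃ v₁ v₂ : Pd d, v₁ ≠ v₂ ∧ x = |φ v₁ - φ v₂| / pdelta v₁ v₂ ^ α }

/-- The total variation distance between two finite measures. -/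
def tvDist (μ ν : Measure (GLd d)) [IsFiniteMeasure μ] [IsFiniteMeasure ν] : ℝ :=
  ((μ.toSignedMeasure - ν.toSignedMeasure).totalVariation Set.univ).toReal

/-- A measure is compactly supported. -/
def CompactlySupported (μ : Measure (GLd d)) : Prop :=
  ∃ K : Set (GLd d), IsCompact K ∧ μ Kᶜ = 0

/-- `S` is the (topological) support of `μ`. -/
def IsSupport (μ : Measure (GLd d)) (S : Set (GLd d)) : Prop :=
  μ Sᶜ = 0 ∧ ∀ x ∈ S, ∀ U : Set (GLd d), IsOpen U → x ∈ U → 0 < μ U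

/-- A measure `η` on `ℙ(ℝ^d)` is `μ`-stationary. -/
def Stationary (μ : Measure (GLd d)) (η : Measure (Pd d)) : Prop :=
  ∀ φ : Pd d → ℝ, Continuous φ → (∃ C, ∀ v, |φ v| ≤ C) →
    ∫ v, φ v ∂η = ∫ g, ∫ v, φ (pact g v) ∂η ∂μ


/-- The observable `v̂ ↦ ∫ log(‖g v‖/‖v‖) dμ(g)` on projective space. -/
def phiObs (μ : Measure (GLd d)) : Pd d → ℝ :=
  fun v => ∫ g, Real.log (‖glCLM g v.rep‖ / ‖v.rep‖) ∂μ

/-!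
Cut `(Q_μ)^[n]` into blocks of a fixed length `L`. One block multiplies the `α`-Hölder constant of
an observable by at most `sup_{x,y} ∫ (N₂ g · ‖x‖‖y‖ / (‖gx‖‖gy‖))^α dμ^{*L}(g)`, since the bracket
bounds the expansion of the projective distance. For `μ = μ₀` the mean of its logarithm is about
`L (L₁ + L₂ - 2 L₁) = -L (L₁ - L₂) < 0` uniformly in `x, y`, and Hoeffding's lemma turns this into
a factor `ρ < 1` for small `α`; total variation continuity keeps the factor below `1` near `μ₀`.

The uniform lower bound for `∫ log (‖gv‖ / ‖v‖) dμ₀^{*L}(g)` is where quasi-irreducibility enters.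
Along a sequence of matrices, the vectors growing more slowly than `e^{cn}`, with `c < L₁`, form a
random subspace. If a fixed `v ≠ 0` lay in it with positive probability, the Markov property and
a maximality argument would give a nonzero vector lying in it almost surely; such vectors span an
invariant subspace of exponent at most `c`, which quasi-irreducibility excludes. So every `v` almost
surely has a time at which it has grown by `e^{cn}`. Compactness of the sphere makes these times
uniform, and concatenating them bounds the mean growth from below.
-/

/-! ### Distortion of a matrix -/

lemma abs_log_le_log {x R : ℝ} (hR : 0 < R) (hRx : R⁻¹ ≤ x) (hxR : x ≤ R) :
    |Real.log x| ≤ Real.log R := by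
  refine abs_le.2 ⟨?_, Real.log_le_log ((inv_pos.2 hR).trans_le hRx) hxR⟩
  simpa only [Real.log_inv] using Real.log_le_log (inv_pos.2 hR) hRx

instance : SecondCountableTopology (GLd d) := by
  have : SecondCountableTopology (Matrix (Fin d) (Fin d) ℝ) :=
    inferInstanceAs (SecondCountableTopology (Fin d → Fin d → ℝ))
  have : SecondCountableTopology (Matrix (Fin d) (Fin d) ℝ)ᵐᵒᵖ :=
    MulOpposite.opHomeomorph.symm.secondCountableTopology
  exact Units.isEmbedding_embedProduct.secondCountableTopology

lemma glCLM_mul (g h : GLd d) : glCLM (g * h) = glCLM g * glCLM h := by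
  rw [glCLM, glCLM, glCLM, ← map_mul]; rfl

lemma glCLM_mul_apply (g h : GLd d) (v : Ed d) : glCLM (g * h) v = glCLM g (glCLM h v) := by
  rw [glCLM_mul]; rfl

@[simp] lemma glCLM_one : glCLM (1 : GLd d) = 1 := map_one _

@[fun_prop] lemma continuous_glCLM : Continuous (glCLM : GLd d → (Ed d →L[ℝ] Ed d)) :=
  (LinearMap.continuous_of_finiteDimensional
    ((Matrix.toEuclideanCLM (n := Fin d) (𝕜 := ℝ)).toAlgEquiv.toLinearMap)).comp
    Units.continuous_val

lemma continuous_glCLM_apply (v : Ed d) : Continuous fun g : GLd d => glCLM g v :=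
  continuous_glCLM.clm_apply continuous_const

lemma glCLM_ne_zero (g : GLd d) {v : Ed d} (hv : v ≠ 0) : glCLM g v ≠ 0 :=
  (map_ne_zero_iff (glCLM g) (glLinear_injective g)).2 hv

lemma continuous_gnorm : Continuous (gnorm : GLd d → ℝ) := continuous_glCLM.norm

lemma gnorm_mul_le (g h : GLd d) : gnorm (g * h) ≤ gnorm g * gnorm h := by
  simpa only [gnorm, glCLM_mul] using norm_mul_le (glCLM g) (glCLM h)

/-- `g` distorts lengths by a factor of at most `R`: both `g` and `g⁻¹` have norm at most `R`. -/
def DistortionLE (R : ℝ) (g : GLd d) : Prop := gnorm g ≤ R ∧ gnorm g⁻¹ ≤ R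

namespace DistortionLE

variable {R R' : ℝ} {g h : GLd d}

lemma one : DistortionLE 1 (1 : GLd d) := by
  have h : ‖(1 : Ed d →L[ℝ] Ed d)‖ ≤ 1 := ContinuousLinearMap.norm_id_le
  simpa [DistortionLE, gnorm] using h

lemma nonneg (hg : DistortionLE R g) : 0 ≤ R := (norm_nonneg _).trans hg.1

lemma mul (hg : DistortionLE R g) (hh : DistortionLE R' h) : DistortionLE (R * R') (g * h) := by
  refine ⟨(gnorm_mul_le g h).trans ?_, ?_⟩
  · exact mul_le_mul hg.1 hh.1 (norm_nonneg _) hg.nonneg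
  · rw [mul_inv_rev, mul_comm R]
    exact (gnorm_mul_le _ _).trans (mul_le_mul hh.2 hg.2 (norm_nonneg _) hh.nonneg)

lemma norm_apply_le (hg : DistortionLE R g) (v : Ed d) : ‖glCLM g v‖ ≤ R * ‖v‖ :=
  (glCLM g).le_of_opNorm_le hg.1 v

lemma norm_le_apply (hg : DistortionLE R g) (v : Ed d) : ‖v‖ ≤ R * ‖glCLM g v‖ := by
  simpa only [glCLM_leftInv] using (glCLM g⁻¹).le_of_opNorm_le hg.2 (glCLM g v)

lemma pos (hg : DistortionLE R g) {v : Ed d} (hv : v ≠ 0) : 0 < R :=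
  pos_of_mul_pos_left ((norm_pos_iff.2 hv).trans_le (hg.norm_le_apply v)) (norm_nonneg _)

end DistortionLE

lemma isClosed_setOf_distortionLE (R : ℝ) : IsClosed {g : GLd d | DistortionLE R g} :=
  (isClosed_le continuous_gnorm continuous_const).inter
    (isClosed_le (continuous_gnorm.comp continuous_inv) continuous_const)

lemma exists_forall_mem_distortionLE {S : Set (GLd d)} (hS : IsCompact S) :
    ∃ K : ℝ, 1 ≤ K ∧ ∀ g ∈ S, DistortionLE K g := by
  obtain ⟨C₁, hC₁⟩ := (hS.image continuous_gnorm).bddAbove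
  obtain ⟨C₂, hC₂⟩ := (hS.image (continuous_gnorm.comp continuous_inv)).bddAbove
  refine ⟨max 1 (max C₁ C₂), le_max_left _ _, fun g hg => ⟨?_, ?_⟩⟩
  · exact (hC₁ ⟨g, hg, rfl⟩).trans ((le_max_left _ _).trans (le_max_right _ _))
  · exact (hC₂ ⟨g, hg, rfl⟩).trans ((le_max_right _ _).trans (le_max_right _ _))

/-- The logarithmic stretch `log (‖g v‖ / ‖v‖)`. -/
def logStretch (g : GLd d) (v : Ed d) : ℝ := Real.log (‖glCLM g v‖ / ‖v‖)

lemma logStretch_eq_sub (g : GLd d) {v : Ed d} (hv : v ≠ 0) :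
    logStretch g v = Real.log ‖glCLM g v‖ - Real.log ‖v‖ :=
  Real.log_div (norm_ne_zero_iff.2 (glCLM_ne_zero g hv)) (norm_ne_zero_iff.2 hv)

lemma logStretch_smul (g : GLd d) {c : ℝ} (hc : c ≠ 0) (v : Ed d) :
    logStretch g (c • v) = logStretch g v := by
  rw [logStretch, map_smul, norm_smul, norm_smul, mul_div_mul_left _ _ (norm_ne_zero_iff.2 hc),
    logStretch]

lemma measurable_logStretch (v : Ed d) : Measurable fun g : GLd d => logStretch g v :=
  Real.measurable_log.comp ((continuous_glCLM_apply v).norm.div_const _).measurable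

lemma DistortionLE.abs_logStretch_le {R : ℝ} {g : GLd d} (hg : DistortionLE R g) {v : Ed d}
    (hv : v ≠ 0) : |logStretch g v| ≤ Real.log R := by
  have hv₀ : 0 < ‖v‖ := norm_pos_iff.2 hv
  refine abs_log_le_log (hg.pos hv) ?_ ((div_le_iff₀ hv₀).2 (hg.norm_apply_le v))
  rw [le_div_iff₀ hv₀, inv_mul_le_iff₀ (hg.pos hv)]
  exact hg.norm_le_apply v

/-! ### Convolution powers -/

section Measure

variable {α β : Type*} [MeasurableSpace α] [MeasurableSpace β] {μ : Measure α} {ν : Measure β}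

lemma ae_prod_of_ae {p : α → Prop} {q : β → Prop} (hp : ∀ᵐ a ∂μ, p a)
    (hq : ∀ᵐ b ∂ν, q b) : ∀ᵐ z ∂μ.prod ν, p z.1 ∧ q z.2 :=
  (Measure.quasiMeasurePreserving_fst.ae hp).and (Measure.quasiMeasurePreserving_snd.ae hq)

lemma integral_comp_of_measurePreserving {f : α → β} (hf : MeasurePreserving f μ ν) {φ : β → ℝ}
    (hφ : AEStronglyMeasurable φ ν) : ∫ a, φ (f a) ∂μ = ∫ b, φ b ∂ν := by
  rw [← hf.map_eq] at hφ ⊢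
  exact (integral_map hf.aemeasurable hφ).symm

lemma abs_integral_le_of_ae_abs_le [IsProbabilityMeasure μ] {φ : α → ℝ} {M : ℝ}
    (h : ∀ᵐ a ∂μ, |φ a| ≤ M) : |∫ a, φ a ∂μ| ≤ M := by
  simpa using norm_integral_le_of_norm_le_const (f := φ) h

end Measure

lemma mconv_eq_mconv (μ ν : Measure (GLd d)) : mconv μ ν = Measure.mconv μ ν := rfl

@[simp] lemma mconvN_zero (μ : Measure (GLd d)) : mconvN μ 0 = Measure.dirac 1 := rfl

section mconvN

variable (μ : Measure (GLd d)) [IsProbabilityMeasure μ]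

lemma mconvN_succ (n : ℕ) : mconvN μ (n + 1) = mconv (mconvN μ n) μ := by
  rcases n with _ | n
  · exact (Measure.dirac_one_mconv μ).symm
  · rfl

instance isProbabilityMeasure_mconvN (n : ℕ) : IsProbabilityMeasure (mconvN μ n) := by
  induction n with
  | zero => rw [mconvN_zero]; infer_instance
  | succ n ih =>
    rw [mconvN_succ, mconv]
    exact Measure.isProbabilityMeasure_map (by fun_prop)

lemma mconvN_add (m n : ℕ) : mconvN μ (m + n) = mconv (mconvN μ m) (mconvN μ n) := by
  induction n with
  | zero => exact (Measure.mconv_dirac_one _).symm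
  | succ n ih =>
    rw [← add_assoc, mconvN_succ, ih, mconvN_succ]
    simp only [mconv_eq_mconv, Measure.mconv_assoc]

lemma measurePreserving_mul_mconvN (m n : ℕ) :
    MeasurePreserving (fun p : GLd d × GLd d => p.1 * p.2) ((mconvN μ m).prod (mconvN μ n))
      (mconvN μ (m + n)) :=
  ⟨by fun_prop, (mconvN_add μ m n).symm⟩

variable {μ}

lemma ae_mconvN_distortionLE {K : ℝ} (h : ∀ᵐ g ∂μ, DistortionLE K g) (n : ℕ) :
    ∀ᵐ g ∂mconvN μ n, DistortionLE (K ^ n) g := by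
  induction n with
  | zero =>
    rw [mconvN_zero, ae_dirac_iff (isClosed_setOf_distortionLE _).measurableSet, pow_zero]
    exact DistortionLE.one
  | succ n ih =>
    rw [mconvN_succ, mconv, ae_map_iff (by fun_prop) (isClosed_setOf_distortionLE _).measurableSet]
    filter_upwards [ae_prod_of_ae ih h] with p hp
    exact pow_succ K n ▸ hp.1.mul hp.2

end mconvN

/-! ### Random walks -/

section PathSpace

variable {G : Type*}

/-- The path obtained by putting a letter in front of a path. -/
def pathCons (p : G × (ℕ → G)) : ℕ → G
  | 0 => p.1
  | n + 1 => p.2 n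

/-- The left shift on paths. -/
def pathShift (ω : ℕ → G) : ℕ → G := fun n => ω (n + 1)

lemma pathShift_iterate_apply (i n : ℕ) (ω : ℕ → G) : pathShift^[i] ω n = ω (n + i) := by
  induction i generalizing ω with
  | zero => rfl
  | succ i ih => rw [Function.iterate_succ_apply, ih, pathShift, add_assoc]

/-- The random walk `ω (n - 1) * ⋯ * ω 0` driven by a path `ω`: new letters act on the left. -/
def pathProd [Monoid G] : ℕ → (ℕ → G) → G
  | 0, _ => 1
  | n + 1, ω => pathProd n (pathShift ω) * ω 0

lemma pathProd_add [Monoid G] (i n : ℕ) (ω : ℕ → G) :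
    pathProd (i + n) ω = pathProd n (pathShift^[i] ω) * pathProd i ω := by
  induction i generalizing ω with
  | zero => simp [pathProd]
  | succ i ih => rw [add_right_comm, pathProd, ih, pathProd, mul_assoc, Function.iterate_succ_apply]

lemma pathProd_succ' [Monoid G] (n : ℕ) (ω : ℕ → G) :
    pathProd (n + 1) ω = ω n * pathProd n ω := by
  rw [pathProd_add]
  simp [pathProd, pathShift_iterate_apply]

lemma pathCons_preimage_pi (s : Finset ℕ) (t : ℕ → Set G) :
    pathCons ⁻¹' (s : Set ℕ).pi t =
      {g | 0 ∈ s → g ∈ t 0} ×ˢ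
        (s.preimage Nat.succ Nat.succ_injective.injOn : Set ℕ).pi fun i => t (i + 1) := by
  ext p
  simp only [Set.mem_preimage, Set.mem_pi, Set.mem_prod, Finset.coe_preimage]
  refine ⟨fun h => ⟨h 0, fun i hi => h (i + 1) hi⟩, fun h i hi => ?_⟩
  cases i with
  | zero => exact h.1 hi
  | succ i => exact h.2 i hi

variable [MeasurableSpace G]

@[fun_prop] lemma measurable_pathCons : Measurable (pathCons : G × (ℕ → G) → ℕ → G) := by
  refine measurable_pi_iff.2 fun n => ?_
  cases n with
  | zero => exact measurable_fst
  | succ n => exact (measurable_pi_apply n).comp measurable_snd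

@[fun_prop] lemma measurable_pathShift : Measurable (pathShift : (ℕ → G) → ℕ → G) :=
  measurable_pi_iff.2 fun n => measurable_pi_apply (n + 1)

@[fun_prop] lemma measurable_pathProd [Monoid G] [MeasurableMul₂ G] (n : ℕ) :
    Measurable (pathProd n : (ℕ → G) → G) := by
  induction n with
  | zero => exact measurable_const
  | succ n ih => exact (ih.comp measurable_pathShift).mul (measurable_pi_apply 0)

/-- The law of a sequence of independent letters with common law `μ`. -/
def pathMeasure (μ : Measure G) : Measure (ℕ → G) :=
  Measure.infinitePi fun _ => μ

variable (μ : Measure G) [IsProbabilityMeasure μ]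

instance : IsProbabilityMeasure (pathMeasure μ) := by
  unfold pathMeasure; infer_instance

lemma measurePreserving_eval_pathMeasure (i : ℕ) :
    MeasurePreserving (fun ω : ℕ → G => ω i) (pathMeasure μ) μ :=
  measurePreserving_eval_infinitePi (fun _ : ℕ => μ) i

lemma measurePreserving_pathCons :
    MeasurePreserving pathCons (μ.prod (pathMeasure μ)) (pathMeasure μ) := by
  refine ⟨by fun_prop, Measure.eq_infinitePi _ fun s t ht => ?_⟩
  rw [Measure.map_apply (by fun_prop) (.pi s.countable_toSet fun i _ => ht i),
    pathCons_preimage_pi, Measure.prod_prod, pathMeasure, Measure.infinitePi_pi _ fun i _ => ht _]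
  classical
  have herase : s.filter (· ∈ Set.range Nat.succ) = s.erase 0 := by
    ext i; cases i <;> simp
  rw [Finset.prod_preimage' Nat.succ s Nat.succ_injective.injOn fun i => μ (t i), herase]
  by_cases h0 : 0 ∈ s
  · simp [h0, Finset.mul_prod_erase s (fun i => μ (t i))]
  · simp [h0]

end PathSpace

section Markov

variable (μ : Measure (GLd d)) [IsProbabilityMeasure μ]

lemma measurePreserving_pathProd_pathShift (i : ℕ) :
    MeasurePreserving (fun ω : ℕ → GLd d => (pathProd i ω, pathShift^[i] ω)) (pathMeasure μ)
      ((mconvN μ i).prod (pathMeasure μ)) := by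
  induction i with
  | zero =>
    refine ⟨by fun_prop, ?_⟩
    rw [mconvN_zero, Measure.dirac_prod]
    rfl
  | succ i ih =>
    have hmul : MeasurePreserving (fun p : GLd d × GLd d => p.2 * p.1) (μ.prod (mconvN μ i))
        (mconvN μ (i + 1)) := by
      rw [mconvN_succ]
      exact (⟨by fun_prop, rfl⟩ : MeasurePreserving (fun p : GLd d × GLd d => p.1 * p.2)
        ((mconvN μ i).prod μ) (mconv (mconvN μ i) μ)).comp Measure.measurePreserving_swap
    have hstep := ((hmul.prod (MeasurePreserving.id (pathMeasure μ))).comp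
      (measurePreserving_prodAssoc _ _ _).symm).comp ((MeasurePreserving.id μ).prod ih)
    refine ⟨(measurable_pathProd _).prodMk (measurable_pathShift.iterate _), ?_⟩
    conv_lhs => rw [← (measurePreserving_pathCons μ).map_eq]
    rw [Measure.map_map ((measurable_pathProd _).prodMk (measurable_pathShift.iterate _))
      measurable_pathCons]
    exact hstep.map_eq

lemma measurePreserving_pathProd (i : ℕ) :
    MeasurePreserving (pathProd i) (pathMeasure μ) (mconvN μ i) :=
  measurePreserving_fst.comp (measurePreserving_pathProd_pathShift μ i)

end Markov

/-! ### Slow vectors -/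

section Semicontinuity

variable {X Ω : Type*} [TopologicalSpace X] [FirstCountableTopology X] [MeasurableSpace Ω]

lemma upperSemicontinuous_measure_setOf_mem (P : Measure Ω) [IsFiniteMeasure P] {F : Ω → Set X}
    (hF : ∀ ω, IsClosed (F ω)) (hm : ∀ x, MeasurableSet {ω | x ∈ F ω}) :
    UpperSemicontinuous fun x => P {ω | x ∈ F ω} := by
  intro x r hr
  by_contra hcon
  obtain ⟨u, hu, hur⟩ := exists_seq_forall_of_frequently (not_eventually.1 hcon)
  have hanti : Antitone fun n => ⋃ k ≥ n, {ω | u k ∈ F ω} :=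
    fun m n hmn => Set.biUnion_subset_biUnion_left fun k hk => le_trans hmn hk
  have hlim := tendsto_measure_iInter_atTop (μ := P)
    (fun n => (MeasurableSet.biUnion (Set.to_countable {k | k ≥ n})
      fun k _ => hm (u k)).nullMeasurableSet) hanti ⟨0, measure_ne_top _ _⟩
  have hle : r ≤ P (⋂ n, ⋃ k ≥ n, {ω | u k ∈ F ω}) := ge_of_tendsto' hlim fun n =>
    (not_lt.1 (hur n)).trans
      (measure_mono (Set.subset_biUnion_of_mem (u := fun k => {ω | u k ∈ F ω}) (le_refl n)))
  refine (hr.trans_le hle).not_ge (measure_mono fun ω hω => ?_)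
  refine (hF ω).mem_of_frequently_of_tendsto (frequently_atTop.2 fun n => ?_) hu
  simpa using Set.mem_iInter.1 hω n

end Semicontinuity

/-- The subspace of vectors whose growth along the path `ω` is `O(exp (c * n))`. -/
def slowSubspace (c : ℝ) (ω : ℕ → GLd d) : Submodule ℝ (Ed d) where
  carrier := {v | ∃ C : ℝ, ∀ n : ℕ, ‖glCLM (pathProd n ω) v‖ ≤ C * Real.exp (c * n)}
  zero_mem' := ⟨0, fun n => by simp⟩
  add_mem' := by
    rintro v w ⟨C, hC⟩ ⟨D, hD⟩
    refine ⟨C + D, fun n => ?_⟩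
    rw [map_add, add_mul]
    exact (norm_add_le _ _).trans (add_le_add (hC n) (hD n))
  smul_mem' := by
    rintro a v ⟨C, hC⟩
    refine ⟨|a| * C, fun n => ?_⟩
    rw [map_smul, norm_smul, Real.norm_eq_abs, mul_assoc]
    exact mul_le_mul_of_nonneg_left (hC n) (abs_nonneg a)

/-- The event that the path `ω` keeps `‖A_n v‖` below `C * exp (c * n)` for all `n ≤ N`. -/
def slowUpTo (c C : ℝ) (N : ℕ) (v : Ed d) : Set (ℕ → GLd d) :=
  {ω | ∀ n ≤ N, ‖glCLM (pathProd n ω) v‖ ≤ C * Real.exp (c * n)}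

section Slow

variable {c C : ℝ} {N : ℕ} {g : GLd d} {v : Ed d} {ω : ℕ → GLd d}

lemma slowUpTo_antitone (c C : ℝ) (v : Ed d) : Antitone fun N => slowUpTo c C N v :=
  fun _ _ hmn _ hω n hn => hω n (hn.trans hmn)

lemma mem_iInter_slowUpTo : ω ∈ ⋂ N, slowUpTo c C N v ↔
    ∀ n : ℕ, ‖glCLM (pathProd n ω) v‖ ≤ C * Real.exp (c * n) :=
  Set.mem_iInter.trans ⟨fun h n => h n n le_rfl, fun h _ n _ => h n⟩

lemma mem_slowSubspace_iff : v ∈ slowSubspace c ω ↔ ∃ C : ℕ, ω ∈ ⋂ N, slowUpTo c C N v := by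
  simp only [mem_iInter_slowUpTo]
  refine ⟨fun ⟨C, hC⟩ => ?_, fun ⟨C, hC⟩ => ⟨C, hC⟩⟩
  obtain ⟨k, hk⟩ := exists_nat_ge C
  exact ⟨k, fun n => (hC n).trans (by gcongr)⟩

lemma measurable_norm_pathProd_apply (n : ℕ) (v : Ed d) :
    Measurable fun ω : ℕ → GLd d => ‖glCLM (pathProd n ω) v‖ :=
  ((continuous_glCLM_apply v).norm.measurable).comp (measurable_pathProd n)

lemma measurableSet_slowUpTo (c C : ℝ) (N : ℕ) (v : Ed d) :
    MeasurableSet (slowUpTo c C N v) := by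
  simp only [slowUpTo, Set.ofPred_forall]
  exact .iInter fun n => .iInter fun _ =>
    measurableSet_le (measurable_norm_pathProd_apply n v) measurable_const

lemma measurableSet_mem_slowSubspace (c : ℝ) (v : Ed d) :
    MeasurableSet {ω : ℕ → GLd d | v ∈ slowSubspace c ω} := by
  simp only [mem_slowSubspace_iff, Set.ofPred_exists]
  exact .iUnion fun C => .iInter fun N => measurableSet_slowUpTo c C N v

lemma slow_bound_succ (c C : ℝ) (n : ℕ) :
    C * Real.exp c * Real.exp (c * n) = C * Real.exp (c * (n + 1 : ℕ)) := by
  rw [mul_assoc, ← Real.exp_add]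
  push_cast
  ring_nf

lemma pathCons_mem_slowUpTo_succ : pathCons (g, ω) ∈ slowUpTo c C (N + 1) v ↔
    ‖v‖ ≤ C ∧ ω ∈ slowUpTo c (C * Real.exp c) N (glCLM g v) := by
  have hsucc (n : ℕ) : ‖glCLM (pathProd (n + 1) (pathCons (g, ω))) v‖ =
      ‖glCLM (pathProd n ω) (glCLM g v)‖ := congrArg _ (glCLM_mul_apply _ _ _)
  refine ⟨fun h => ⟨by simpa [pathProd] using h 0 (Nat.zero_le _), fun n hn => ?_⟩, ?_⟩
  · rw [slow_bound_succ, ← hsucc]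
    exact h (n + 1) (by omega)
  · rintro ⟨h₀, h⟩ (_ | n) hn
    · simpa [pathProd] using h₀
    · rw [hsucc, ← slow_bound_succ]
      exact h n (by omega)

lemma mem_slowSubspace_pathCons :
    v ∈ slowSubspace c (pathCons (g, ω)) ↔ glCLM g v ∈ slowSubspace c ω := by
  constructor
  · rintro ⟨C, hC⟩
    exact ⟨C * Real.exp c, fun n => ((pathCons_mem_slowUpTo_succ (N := n)).1
      (fun k _ => hC k)).2 n le_rfl⟩
  · rintro ⟨C, hC⟩
    refine ⟨max ‖v‖ (C * Real.exp (-c)), fun n =>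
      (pathCons_mem_slowUpTo_succ (N := n)).2 ⟨le_max_left _ _, fun k _ => (hC k).trans ?_⟩ n
        (Nat.le_succ n)⟩
    gcongr
    calc C = C * Real.exp (-c) * Real.exp c := by simp [mul_assoc, ← Real.exp_add]
      _ ≤ _ := by gcongr; exact le_max_right _ _

end Slow

section SlowProbability

variable (μ : Measure (GLd d)) [IsProbabilityMeasure μ] {c : ℝ}

lemma pathMeasure_eq_lintegral_pathCons {B : Set (ℕ → GLd d)} (hB : MeasurableSet B) :
    pathMeasure μ B = ∫⁻ g, pathMeasure μ {ω | pathCons (g, ω) ∈ B} ∂μ := by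
  rw [← (measurePreserving_pathCons μ).measure_preimage hB.nullMeasurableSet,
    Measure.prod_apply (measurable_pathCons hB)]
  rfl

lemma measure_slowUpTo_inter_slow_le {p : ENNReal}
    (hp : ∀ v : Ed d, v ≠ 0 → pathMeasure μ {ω | v ∈ slowSubspace c ω} ≤ p) (N : ℕ) (C : ℝ)
    {v : Ed d} (hv : v ≠ 0) :
    pathMeasure μ (slowUpTo c C N v ∩ {ω | v ∈ slowSubspace c ω}) ≤
      p * pathMeasure μ (slowUpTo c C N v) := by
  induction N generalizing C v with
  | zero =>
    have h₀ : slowUpTo c C 0 v = {_ω | ‖v‖ ≤ C} := by ext; simp [slowUpTo, pathProd]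
    by_cases hC : ‖v‖ ≤ C <;> simp [h₀, hC, hp v hv]
  | succ N ih =>
    have hmeas := measurableSet_slowUpTo c C (N + 1) v
    rw [pathMeasure_eq_lintegral_pathCons μ (hmeas.inter (measurableSet_mem_slowSubspace c v)),
      pathMeasure_eq_lintegral_pathCons μ hmeas, ← lintegral_const_mul p
        (f := fun g => pathMeasure μ {ω | pathCons (g, ω) ∈ slowUpTo c C (N + 1) v})
        (measurable_measure_prodMk_left (measurable_pathCons hmeas))]
    refine lintegral_mono fun g => ?_
    simp only [Set.mem_inter_iff, Set.mem_ofPred_eq, mem_slowSubspace_pathCons,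
      pathCons_mem_slowUpTo_succ]
    by_cases hC : ‖v‖ ≤ C
    · simp only [hC, true_and]
      exact ih (C * Real.exp c) (glCLM_ne_zero g hv)
    · simp [hC]

lemma exists_isMax_measure_slow [Nontrivial (Ed d)] (c : ℝ) : ∃ w : Ed d, w ≠ 0 ∧ ∀ v ≠ 0,
    pathMeasure μ {ω | v ∈ slowSubspace c ω} ≤ pathMeasure μ {ω | w ∈ slowSubspace c ω} := by
  have husc : UpperSemicontinuous fun v : Ed d => pathMeasure μ {ω | v ∈ slowSubspace c ω} :=
    upperSemicontinuous_measure_setOf_mem (pathMeasure μ)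
      (F := fun ω => (slowSubspace c ω : Set (Ed d)))
      (fun ω => (slowSubspace c ω).closed_of_finiteDimensional) (measurableSet_mem_slowSubspace c)
  obtain ⟨w, hw, hmax⟩ := (husc.upperSemicontinuousOn (Metric.sphere 0 1)).exists_isMaxOn
    (NormedSpace.sphere_nonempty.2 zero_le_one) (isCompact_sphere 0 1)
  refine ⟨w, ne_zero_of_mem_unit_sphere ⟨w, hw⟩, fun v hv => ?_⟩
  have hnorm : ‖v‖⁻¹ • v ∈ Metric.sphere (0 : Ed d) 1 := by simp [norm_smul, hv]
  simpa only [Submodule.smul_mem_iff _ (inv_ne_zero (norm_ne_zero_iff.2 hv))] using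
    isMaxOn_iff.1 hmax _ hnorm

/- If `p` is the maximal probability of being slow, conditioning on being slow up to time `N`
does not push that probability above `p`; but the limit `N → ∞` of these events consists of
slow paths. Hence `p = 1`. -/
lemma exists_ae_slow {C : ℝ} {v : Ed d} (hv : v ≠ 0)
    (hpos : pathMeasure μ (⋂ N, slowUpTo c C N v) ≠ 0) :
    ∃ w : Ed d, w ≠ 0 ∧ ∀ᵐ ω ∂pathMeasure μ, w ∈ slowSubspace c ω := by
  have := nontrivial_of_ne v 0 hv
  obtain ⟨w, hw, hmax⟩ := exists_isMax_measure_slow μ c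
  refine ⟨w, hw, (prob_compl_eq_zero_iff (measurableSet_mem_slowSubspace c w)).2
    (prob_le_one.antisymm ?_)⟩
  set p := pathMeasure μ {ω | w ∈ slowSubspace c ω}
  have hlim := tendsto_measure_iInter_atTop (μ := pathMeasure μ)
    (fun N => (measurableSet_slowUpTo c C N v).nullMeasurableSet) (slowUpTo_antitone c C v)
    ⟨0, measure_ne_top _ _⟩
  have hle (N : ℕ) : pathMeasure μ (⋂ N, slowUpTo c C N v) ≤
      p * pathMeasure μ (slowUpTo c C N v) :=
    (measure_mono (Set.subset_inter (Set.iInter_subset _ N)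
      fun _ hω => (⟨C, mem_iInter_slowUpTo.1 hω⟩ : v ∈ slowSubspace c _))).trans
      (measure_slowUpTo_inter_slow_le μ hmax N C hv)
  have hfix := ge_of_tendsto' (ENNReal.Tendsto.const_mul hlim (.inr (measure_ne_top _ _))) hle
  refine (ENNReal.mul_le_mul_iff_left hpos (measure_ne_top _ _)).1 ?_
  rwa [one_mul]

end SlowProbability

/-! ### Existence of exponents -/

section Fekete

variable {μ : Measure (GLd d)} [IsProbabilityMeasure μ] {f : GLd d → ℝ} {M : ℝ}

lemma subadditive_integral_mconvN (hf : ∀ n, Integrable f (mconvN μ n))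
    (hsub : ∀ m n, ∀ᵐ p ∂(mconvN μ m).prod (mconvN μ n), f (p.1 * p.2) ≤ f p.1 + f p.2) :
    Subadditive fun n => ∫ g, f g ∂mconvN μ n := by
  intro m n
  have hmul := measurePreserving_mul_mconvN μ m n
  have hfst := measurePreserving_fst (μ := mconvN μ m) (ν := mconvN μ n)
  have hsnd := measurePreserving_snd (μ := mconvN μ m) (ν := mconvN μ n)
  beta_reduce
  rw [← integral_comp_of_measurePreserving hmul (hf (m + n)).aestronglyMeasurable,
    ← integral_comp_of_measurePreserving hfst (hf m).aestronglyMeasurable,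
    ← integral_comp_of_measurePreserving hsnd (hf n).aestronglyMeasurable,
    ← integral_add ((hf m).comp_fst _) ((hf n).comp_snd _)]
  exact integral_mono_ae (hmul.integrable_comp_of_integrable (hf _))
    (((hf m).comp_fst _).add ((hf n).comp_snd _)) (hsub m n)

lemma exists_tendsto_integral_mconvN (hf : Measurable f)
    (hbound : ∀ n : ℕ, ∀ᵐ g ∂mconvN μ n, |f g| ≤ n * M)
    (hsub : ∀ m n, ∀ᵐ p ∂(mconvN μ m).prod (mconvN μ n), f (p.1 * p.2) ≤ f p.1 + f p.2) :
    ∃ l, Tendsto (fun n : ℕ => (n : ℝ)⁻¹ * ∫ g, f g ∂mconvN μ n) atTop (nhds l) := by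
  have hsubadd := subadditive_integral_mconvN
    (fun n => .of_bound hf.aestronglyMeasurable (n * M) (hbound n)) hsub
  have hbdd : BddBelow (Set.range fun n : ℕ => (∫ g, f g ∂mconvN μ n) / n) := by
    refine ⟨-|M|, ?_⟩
    rintro _ ⟨n, rfl⟩
    refine (abs_le.1 ?_).1
    rw [abs_div, Nat.abs_cast]
    refine div_le_of_le_mul₀ (Nat.cast_nonneg n) (abs_nonneg M) ?_
    refine (abs_integral_le_of_ae_abs_le (hbound n)).trans ?_
    rw [mul_comm]
    gcongr
    exact le_abs_self M
  exact ⟨_, (hsubadd.tendsto_lim hbdd).congr fun n => div_eq_inv_mul _ _⟩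

end Fekete

section Restriction

variable {W : Submodule ℝ (Ed d)} {g h : GLd d}

lemma L1rest_eq_limUnder (μ : Measure (GLd d)) (W : Submodule ℝ (Ed d)) : L1rest μ W =
    limUnder atTop fun n : ℕ => (n : ℝ)⁻¹ *
      ∫ g, Real.log ‖(glCLM g).domRestrict W‖ ∂mconvN μ n := rfl

lemma L1rest_top (μ : Measure (GLd d)) : L1rest μ ⊤ = L1 μ := by
  have hnorm (g : GLd d) : ‖(glCLM g).domRestrict ⊤‖ = gnorm g :=
    le_antisymm
      (ContinuousLinearMap.opNorm_le_bound _ (norm_nonneg (glCLM g)) fun w => (glCLM g).le_opNorm w)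
      (ContinuousLinearMap.opNorm_le_bound _ (norm_nonneg ((glCLM g).domRestrict ⊤)) fun w =>
        ((glCLM g).domRestrict ⊤).le_opNorm ⟨w, trivial⟩)
  simp only [L1rest_eq_limUnder, L1, hnorm]

lemma continuous_norm_domRestrict (W : Submodule ℝ (Ed d)) :
    Continuous fun g : GLd d => ‖(glCLM g).domRestrict W‖ :=
  (continuous_glCLM.clm_comp continuous_const).norm

lemma norm_domRestrict_pos (hW : W ≠ ⊥) (g : GLd d) : 0 < ‖(glCLM g).domRestrict W‖ := by
  obtain ⟨w, hw, hw₀⟩ := Submodule.exists_mem_ne_zero_of_ne_bot hW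
  refine (norm_pos_iff (a := (glCLM g).domRestrict W)).2 fun hzero => glCLM_ne_zero g hw₀ ?_
  exact DFunLike.congr_fun hzero (⟨w, hw⟩ : W)

lemma DistortionLE.abs_log_norm_domRestrict_le {R : ℝ} (hg : DistortionLE R g) (hW : W ≠ ⊥) :
    |Real.log ‖(glCLM g).domRestrict W‖| ≤ Real.log R := by
  obtain ⟨w, hw, hw₀⟩ := Submodule.exists_mem_ne_zero_of_ne_bot hW
  have hwpos : 0 < ‖w‖ := norm_pos_iff.2 hw₀
  refine abs_log_le_log (hg.pos hw₀) ?_ (ContinuousLinearMap.opNorm_le_bound _ hg.nonneg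
    fun u : W => hg.norm_apply_le (u : Ed d))
  rw [inv_le_iff_one_le_mul₀' (hg.pos hw₀)]
  refine le_of_mul_le_mul_right ?_ hwpos
  calc 1 * ‖w‖ ≤ R * ‖glCLM g w‖ := by rw [one_mul]; exact hg.norm_le_apply w
    _ ≤ R * (‖(glCLM g).domRestrict W‖ * ‖w‖) :=
      mul_le_mul_of_nonneg_left (((glCLM g).domRestrict W).le_opNorm ⟨w, hw⟩) hg.nonneg
    _ = R * ‖(glCLM g).domRestrict W‖ * ‖w‖ := (mul_assoc _ _ _).symm

lemma norm_domRestrict_mul_le (hh : Set.MapsTo (glCLM h) W W) :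
    ‖(glCLM (g * h)).domRestrict W‖ ≤ ‖(glCLM g).domRestrict W‖ * ‖(glCLM h).domRestrict W‖ := by
  refine ContinuousLinearMap.opNorm_le_bound _ (by positivity) fun w => ?_
  calc ‖glCLM (g * h) w‖ = ‖(glCLM g).domRestrict W ⟨glCLM h w, hh w.2⟩‖ :=
        congrArg _ (glCLM_mul_apply g h w)
    _ ≤ ‖(glCLM g).domRestrict W‖ * ‖(glCLM h).domRestrict W w‖ :=
        ((glCLM g).domRestrict W).le_opNorm _
    _ ≤ ‖(glCLM g).domRestrict W‖ * (‖(glCLM h).domRestrict W‖ * ‖w‖) := by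
        gcongr; exact ((glCLM h).domRestrict W).le_opNorm w
    _ = _ := (mul_assoc _ _ _).symm

variable {μ : Measure (GLd d)} [IsProbabilityMeasure μ] {K : ℝ}

lemma ae_mconvN_mapsTo (h : ∀ᵐ g ∂μ, Set.MapsTo (glCLM g) W W) (n : ℕ) :
    ∀ᵐ g ∂mconvN μ n, Set.MapsTo (glCLM g) W W := by
  have hclosed : IsClosed {g : GLd d | Set.MapsTo (glCLM g) W W} := by
    simp only [Set.MapsTo, Set.ofPred_forall]
    exact isClosed_iInter fun v => isClosed_iInter fun _ =>
      W.closed_of_finiteDimensional.preimage (continuous_glCLM_apply v)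
  induction n with
  | zero =>
    rw [mconvN_zero, ae_dirac_iff hclosed.measurableSet, glCLM_one]
    exact Set.mapsTo_id _
  | succ n ih =>
    rw [mconvN_succ, mconv, ae_map_iff (by fun_prop) hclosed.measurableSet]
    filter_upwards [ae_prod_of_ae ih h] with p hp w hw
    rw [glCLM_mul_apply]
    exact hp.1 (hp.2 hw)

lemma ae_mconvN_abs_log_norm_domRestrict_le (hK : ∀ᵐ g ∂μ, DistortionLE K g) (hW : W ≠ ⊥)
    (n : ℕ) : ∀ᵐ g ∂mconvN μ n, |Real.log ‖(glCLM g).domRestrict W‖| ≤ n * Real.log K :=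
  (ae_mconvN_distortionLE hK n).mono fun _ hg => by
    simpa only [Real.log_pow] using hg.abs_log_norm_domRestrict_le hW

lemma tendsto_L1rest (hK : ∀ᵐ g ∂μ, DistortionLE K g) (hW : W ≠ ⊥)
    (hinv : ∀ᵐ g ∂μ, Set.MapsTo (glCLM g) W W) :
    Tendsto (fun n : ℕ => (n : ℝ)⁻¹ * ∫ g, Real.log ‖(glCLM g).domRestrict W‖ ∂mconvN μ n) atTop
      (nhds (L1rest μ W)) := by
  refine tendsto_nhds_limUnder (exists_tendsto_integral_mconvN
    (continuous_norm_domRestrict W).measurable.log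
    (ae_mconvN_abs_log_norm_domRestrict_le hK hW) fun m n => ?_)
  filter_upwards [Measure.quasiMeasurePreserving_snd.ae (ae_mconvN_mapsTo hinv n)] with p hp
  rw [← Real.log_mul (norm_domRestrict_pos hW p.1).ne' (norm_domRestrict_pos hW p.2).ne']
  exact Real.log_le_log (norm_domRestrict_pos hW _) (norm_domRestrict_mul_le hp)

end Restriction

section SlowExponent

lemma le_of_tendsto_integral_of_ae_eventually_le {Ω : Type*} [MeasurableSpace Ω] {P : Measure Ω}
    [IsProbabilityMeasure P] {X : ℕ → Ω → ℝ} {M c l : ℝ} (hX : ∀ n, Measurable (X n))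
    (hM : ∀ n, ∀ᵐ ω ∂P, |X n ω| ≤ M) (hc : ∀ᵐ ω ∂P, ∀ b > c, ∀ᶠ n in atTop, X n ω ≤ b)
    (hl : Tendsto (fun n => ∫ ω, X n ω ∂P) atTop (nhds l)) : l ≤ c := by
  have hbound (n : ℕ) : ∀ᵐ ω ∂P, |max (X n ω) c| ≤ max M |c| :=
    (hM n).mono fun ω hω => abs_max_le_max_abs_abs.trans (max_le_max_right _ hω)
  have hmax : Tendsto (fun n => ∫ ω, max (X n ω) c ∂P) atTop (nhds (∫ _, c ∂P)) := by
    refine tendsto_integral_of_dominated_convergence (fun _ => max M |c|)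
      (fun n => ((hX n).max measurable_const).aestronglyMeasurable) (integrable_const _) hbound ?_
    filter_upwards [hc] with ω hω
    refine tendsto_order.2 ⟨fun a ha => .of_forall fun n => ha.trans_le (le_max_right _ _),
      fun b hb => ?_⟩
    obtain ⟨b', hcb', hb'b⟩ := exists_between hb
    filter_upwards [hω b' hcb'] with n hn using (max_le hn hcb'.le).trans_lt hb'b
  rw [integral_const, probReal_univ, one_smul] at hmax
  exact le_of_tendsto_of_tendsto' hl hmax fun n => integral_mono
    (.of_bound (hX n).aestronglyMeasurable M (hM n))
    (.of_bound ((hX n).max measurable_const).aestronglyMeasurable _ (hbound n))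
    fun ω => le_max_left _ _

lemma eventually_inv_mul_log_le {a : ℕ → ℝ} (ha : ∀ n, 0 < a n) {C c b : ℝ}
    (h : ∀ n : ℕ, a n ≤ C * Real.exp (c * n)) (hb : c < b) :
    ∀ᶠ n : ℕ in atTop, (n : ℝ)⁻¹ * Real.log (a n) ≤ b := by
  have hC : 0 < C := pos_of_mul_pos_left ((ha 0).trans_le (h 0)) (Real.exp_pos _).le
  have hlim : Tendsto (fun n : ℕ => (n : ℝ)⁻¹ * Real.log C + c) atTop (nhds c) := by
    simpa using (tendsto_inv_atTop_nhds_zero_nat.mul_const (Real.log C)).add_const c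
  filter_upwards [hlim.eventually_le_const hb, eventually_gt_atTop 0] with n hn hn₀
  calc (n : ℝ)⁻¹ * Real.log (a n)
      ≤ (n : ℝ)⁻¹ * (Real.log C + c * n) := by
        gcongr
        rw [← Real.log_exp (c * n), ← Real.log_mul hC.ne' (Real.exp_pos _).ne']
        exact Real.log_le_log (ha n) (h n)
    _ = (n : ℝ)⁻¹ * Real.log C + c := by field_simp
    _ ≤ b := hn

lemma exists_norm_le_mul_of_pointwise {E F : Type*} [NormedAddCommGroup E] [NormedSpace ℝ E]
    [CompleteSpace E] [NormedAddCommGroup F] [NormedSpace ℝ F] {ι : Type*} {T : ι → E →L[ℝ] F}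
    {a : ι → ℝ} (ha : ∀ i, 0 < a i) (h : ∀ x, ∃ C, ∀ i, ‖T i x‖ ≤ C * a i) :
    ∃ C, ∀ i, ‖T i‖ ≤ C * a i := by
  have hscale (i : ι) {y C : ℝ} : ‖(a i)⁻¹‖ * y ≤ C ↔ y ≤ C * a i := by
    rw [norm_inv, Real.norm_of_nonneg (ha i).le, inv_mul_le_iff₀ (ha i), mul_comm]
  obtain ⟨C, hC⟩ := banach_steinhaus (g := fun i => (a i)⁻¹ • T i) fun x =>
    (h x).imp fun C hC i => by
      rw [smul_apply, norm_smul]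
      exact (hscale i).2 (hC i)
  exact ⟨C, fun i => (hscale i).1 (norm_smul (a i)⁻¹ (T i) ▸ hC i)⟩

variable {μ : Measure (GLd d)} [IsProbabilityMeasure μ] {K : ℝ}

lemma L1rest_le_of_ae_le_slowSubspace (hK : ∀ᵐ g ∂μ, DistortionLE K g)
    {W : Submodule ℝ (Ed d)} (hW : W ≠ ⊥) (hinv : ∀ᵐ g ∂μ, Set.MapsTo (glCLM g) W W) {c : ℝ}
    (hslow : ∀ᵐ ω ∂pathMeasure μ, W ≤ slowSubspace c ω) : L1rest μ W ≤ c := by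
  have hmeas : Measurable fun g : GLd d => Real.log ‖(glCLM g).domRestrict W‖ :=
    (continuous_norm_domRestrict W).measurable.log
  refine le_of_tendsto_integral_of_ae_eventually_le (P := pathMeasure μ) (M := |Real.log K|)
    (X := fun n ω => (n : ℝ)⁻¹ * Real.log ‖(glCLM (pathProd n ω)).domRestrict W‖)
    (fun n => (hmeas.comp (measurable_pathProd n)).const_mul _) (fun n => ?_) ?_ ?_
  · filter_upwards [(measurePreserving_pathProd μ n).quasiMeasurePreserving.ae
      (ae_mconvN_abs_log_norm_domRestrict_le hK hW n)] with ω hω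
    rw [abs_mul, abs_inv, Nat.abs_cast]
    exact inv_mul_le_of_le_mul₀ (Nat.cast_nonneg n) (abs_nonneg _) (hω.trans (by
      gcongr; exact le_abs_self _))
  · filter_upwards [hslow] with ω hω b hb
    obtain ⟨C, hC⟩ := exists_norm_le_mul_of_pointwise
      (T := fun n => (glCLM (pathProd n ω)).domRestrict W)
      (fun n => Real.exp_pos (c * n)) fun w => hω w.2
    exact eventually_inv_mul_log_le (fun n => norm_domRestrict_pos hW _) hC hb
  · refine (tendsto_L1rest hK hW hinv).congr fun n => ?_
    rw [integral_const_mul, ← integral_comp_of_measurePreserving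
      (measurePreserving_pathProd μ n) hmeas.aestronglyMeasurable]

end SlowExponent

section AlmostSure

lemma ae_submodule_le_of_forall_mem {Ω R E : Type*} [MeasurableSpace Ω] [Semiring R]
    [AddCommMonoid E] [Module R E] [IsNoetherian R E] {P : Measure Ω} {W : Submodule R E}
    {F : Ω → Submodule R E} (h : ∀ v ∈ W, ∀ᵐ ω ∂P, v ∈ F ω) : ∀ᵐ ω ∂P, W ≤ F ω := by
  obtain ⟨s, rfl⟩ := IsNoetherian.noetherian W
  filter_upwards [(Finset.eventually_all s).2 fun v hv => h v (Submodule.subset_span hv)] with ω hω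
  exact Submodule.span_le.2 hω

variable (μ : Measure (GLd d)) (c : ℝ)

/-- The subspace of vectors that are slow along almost every path. -/
def aeSlowSubspace : Submodule ℝ (Ed d) where
  carrier := {v | ∀ᵐ ω ∂pathMeasure μ, v ∈ slowSubspace c ω}
  zero_mem' := by simp
  add_mem' := by
    simp only [Set.mem_ofPred_eq]
    intro v w hv hw
    filter_upwards [hv, hw] with ω h₁ h₂ using add_mem h₁ h₂
  smul_mem' := by
    simp only [Set.mem_ofPred_eq]
    exact fun a v hv => hv.mono fun ω h => Submodule.smul_mem _ a h

lemma ae_aeSlowSubspace_le : ∀ᵐ ω ∂pathMeasure μ, aeSlowSubspace μ c ≤ slowSubspace c ω :=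
  ae_submodule_le_of_forall_mem fun _ hv => hv

lemma ae_mapsTo_aeSlowSubspace [IsProbabilityMeasure μ] :
    ∀ᵐ g ∂μ, Set.MapsTo (glCLM g) (aeSlowSubspace μ c) (aeSlowSubspace μ c) := by
  refine ae_submodule_le_of_forall_mem
    (F := fun g => (aeSlowSubspace μ c).comap (glCLM g).toLinearMap) fun v hv => ?_
  have hcons := (measurePreserving_pathCons μ).quasiMeasurePreserving.ae hv
  filter_upwards [Measure.ae_ae_of_ae_prod hcons] with g hg
  exact hg.mono fun ω => mem_slowSubspace_pathCons.1

end AlmostSure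

lemma map_eq_of_mapsTo {W : Submodule ℝ (Ed d)} {g : GLd d} (h : Set.MapsTo (glCLM g) W W) :
    W.map (glCLM g).toLinearMap = W :=
  Submodule.eq_of_le_of_finrank_eq (Submodule.map_le_iff_le_comap.2 h)
    (W.equivMapOfInjective _ (glLinear_injective g)).finrank_eq.symm

section UniformlySlow

variable {μ : Measure (GLd d)} [IsProbabilityMeasure μ] {K c : ℝ}

lemma QuasiIrreducible.aeSlowSubspace_eq_bot (hqi : QuasiIrreducible μ)
    (hK : ∀ᵐ g ∂μ, DistortionLE K g) (hc : c < L1 μ) : aeSlowSubspace μ c = ⊥ := by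
  by_contra hbot
  have hinv := ae_mapsTo_aeSlowSubspace μ c
  have hlt : L1rest μ (aeSlowSubspace μ c) < L1 μ :=
    (L1rest_le_of_ae_le_slowSubspace hK hbot hinv (ae_aeSlowSubspace_le μ c)).trans_lt hc
  refine hqi ⟨_, hbot, fun htop => ?_, hinv.mono fun _ => map_eq_of_mapsTo, hlt⟩
  rw [htop, L1rest_top] at hlt
  exact lt_irrefl _ hlt

lemma QuasiIrreducible.measure_iInter_slowUpTo_eq_zero (hqi : QuasiIrreducible μ)
    (hK : ∀ᵐ g ∂μ, DistortionLE K g) (hc : c < L1 μ) (C : ℝ) {v : Ed d} (hv : v ≠ 0) :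
    pathMeasure μ (⋂ N, slowUpTo c C N v) = 0 := by
  by_contra hpos
  obtain ⟨w, hw, hslow⟩ := exists_ae_slow μ hv hpos
  have hmem : w ∈ aeSlowSubspace μ c := hslow
  rw [hqi.aeSlowSubspace_eq_bot hK hc] at hmem
  exact hw hmem

lemma slowUpTo_smul (c C : ℝ) (N : ℕ) (v : Ed d) {a : ℝ} (ha : 0 < a) :
    slowUpTo c (a * C) N (a • v) = slowUpTo c C N v := by
  ext ω
  simp only [slowUpTo, Set.mem_ofPred_eq, map_smul, norm_smul, Real.norm_of_nonneg ha.le, mul_assoc,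
    mul_le_mul_iff_right₀ ha]

lemma upperSemicontinuous_measure_slowUpTo (μ : Measure (GLd d)) [IsProbabilityMeasure μ]
    (c C : ℝ) (N : ℕ) : UpperSemicontinuous fun v : Ed d => pathMeasure μ (slowUpTo c C N v) := by
  refine upperSemicontinuous_measure_setOf_mem (pathMeasure μ)
    (F := fun ω => {v | ω ∈ slowUpTo c C N v}) (fun ω => ?_) (measurableSet_slowUpTo c C N)
  simp only [slowUpTo, Set.mem_ofPred_eq]
  simp only [Set.ofPred_forall]
  exact isClosed_iInter fun n => isClosed_iInter fun _ =>
    isClosed_le (glCLM _).continuous.norm continuous_const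

lemma QuasiIrreducible.exists_forall_measure_slowUpTo_lt (hqi : QuasiIrreducible μ)
    (hK : ∀ᵐ g ∂μ, DistortionLE K g) (hc : c < L1 μ) {ε : ENNReal} (hε : 0 < ε) :
    ∃ N, ∀ v : Ed d, v ≠ 0 → pathMeasure μ (slowUpTo c ‖v‖ N v) < ε := by
  obtain ⟨N, hN⟩ : ∃ N, ∀ v ∈ Metric.sphere (0 : Ed d) 1,
      pathMeasure μ (slowUpTo c 1 N v) < ε := by
    refine (isCompact_sphere (0 : Ed d) 1).induction_on
      (p := fun s => ∃ N, ∀ v ∈ s, pathMeasure μ (slowUpTo c 1 N v) < ε)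
      ⟨0, by simp⟩ (fun s t hst ⟨N, hN⟩ => ⟨N, fun v hv => hN v (hst hv)⟩)
      (fun s t ⟨M, hM⟩ ⟨N, hN⟩ => ⟨max M N, ?_⟩) fun v hv => ?_
    · rintro v (hv | hv)
      · exact (measure_mono (slowUpTo_antitone c 1 v (le_max_left M N))).trans_lt (hM v hv)
      · exact (measure_mono (slowUpTo_antitone c 1 v (le_max_right M N))).trans_lt (hN v hv)
    · have hlim := tendsto_measure_iInter_atTop (μ := pathMeasure μ)
        (fun N => (measurableSet_slowUpTo c 1 N v).nullMeasurableSet) (slowUpTo_antitone c 1 v)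
        ⟨0, measure_ne_top _ _⟩
      rw [hqi.measure_iInter_slowUpTo_eq_zero hK hc 1 (ne_zero_of_mem_unit_sphere ⟨v, hv⟩)] at hlim
      obtain ⟨N, hN⟩ := (hlim.eventually_lt_const hε).exists
      exact ⟨_, mem_nhdsWithin_of_mem_nhds (upperSemicontinuous_measure_slowUpTo μ c 1 N v ε hN),
        N, fun _ h => h⟩
  refine ⟨N, fun v hv => ?_⟩
  have hv₀ : 0 < ‖v‖ := norm_pos_iff.2 hv
  have hunit := hN (‖v‖⁻¹ • v) (by simp [norm_smul, hv])
  rwa [← slowUpTo_smul c 1 N _ hv₀, smul_inv_smul₀ hv₀.ne', mul_one] at hunit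

end UniformlySlow

/-! ### Uniform growth on average -/

lemma sub_mul_le_of_step {s : ℕ → ℝ} {K : ℝ} (hstep : ∀ i, s i - K ≤ s (i + 1)) (m i : ℕ) :
    s i - K * m ≤ s (i + m) := by
  induction m with
  | zero => simp
  | succ m ih =>
    have hlast := hstep (i + m)
    rw [← add_assoc]
    push_cast
    linarith

lemma sub_mul_le_of_step_of_jump {s b : ℕ → ℝ} {K : ℝ} (hK : 0 ≤ K) {N : ℕ} (hb : ∀ i, 0 ≤ b i)
    (hstep : ∀ i, s i - K ≤ s (i + 1))
    (hjump : ∀ i, (∃ n, 0 < n ∧ n ≤ N ∧ s i ≤ s (i + n)) ∨ 1 ≤ b i) (m i : ℕ) :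
    s i - K * (∑ j ∈ Finset.Ico i (i + m), b j + N) ≤ s (i + m) := by
  have hsum_nonneg (i m : ℕ) : 0 ≤ ∑ j ∈ Finset.Ico i (i + m), b j :=
    Finset.sum_nonneg fun j _ => hb j
  induction m using Nat.strong_induction_on generalizing i with
  | _ m ih =>
    rcases le_or_gt m N with hm | hm
    · have hsteps := sub_mul_le_of_step hstep m i
      have hm' : (m : ℝ) ≤ N := by exact_mod_cast hm
      have hcost :=
        mul_le_mul_of_nonneg_left (hm'.trans (le_add_of_nonneg_left (hsum_nonneg i m))) hK
      linarith
    · rcases hjump i with ⟨n, hn₀, hnN, hn⟩ | hbi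
      · have hrest := ih (m - n) (by omega) (i + n)
        rw [show i + n + (m - n) = i + m by omega] at hrest
        have hsub : ∑ j ∈ Finset.Ico (i + n) (i + m), b j ≤ ∑ j ∈ Finset.Ico i (i + m), b j :=
          Finset.sum_le_sum_of_subset_of_nonneg (Finset.Ico_subset_Ico_left (by omega))
            fun j _ _ => hb j
        have hcost := mul_le_mul_of_nonneg_left hsub hK
        linarith
      · obtain ⟨m, rfl⟩ := Nat.exists_eq_succ_of_ne_zero (by omega : m ≠ 0)
        have hrest := ih m (by omega) (i + 1)
        rw [add_right_comm, add_assoc] at hrest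
        rw [Finset.sum_eq_sum_Ico_succ_bot (by omega)]
        have hcost := mul_le_mul_of_nonneg_left hbi hK
        have hfirst := hstep i
        linarith

/-- The event that, from time `i` on, the walk started at `v` stays slow for `N` steps. -/
def stallSet (c : ℝ) (N : ℕ) (v : Ed d) (i : ℕ) : Set (ℕ → GLd d) :=
  {ω | pathShift^[i] ω ∈ slowUpTo c ‖glCLM (pathProd i ω) v‖ N (glCLM (pathProd i ω) v)}

/-- The number of times before `L` at which the walk started at `v` stalls. -/
def stallCount (c : ℝ) (N : ℕ) (v : Ed d) (L : ℕ) (ω : ℕ → GLd d) : ℝ :=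
  ∑ i ∈ Finset.range L, (stallSet c N v i).indicator 1 ω

section Stall

variable {c : ℝ} {N : ℕ} {v : Ed d}

lemma measurableSet_slowUpTo_norm_apply (c : ℝ) (N : ℕ) (v : Ed d) :
    MeasurableSet {p : GLd d × (ℕ → GLd d) | p.2 ∈ slowUpTo c ‖glCLM p.1 v‖ N (glCLM p.1 v)} := by
  have hnorm : Measurable fun g : GLd d => ‖glCLM g v‖ := (continuous_glCLM_apply v).norm.measurable
  simp only [slowUpTo, Set.mem_ofPred_eq, ← glCLM_mul_apply]
  simp only [Set.ofPred_forall]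
  exact .iInter fun n => .iInter fun _ => measurableSet_le
    (hnorm.comp (((measurable_pathProd n).comp measurable_snd).mul measurable_fst))
    ((hnorm.comp measurable_fst).mul_const _)

lemma measurableSet_stallSet (c : ℝ) (N : ℕ) (v : Ed d) (i : ℕ) :
    MeasurableSet (stallSet c N v i) :=
  ((measurable_pathProd i).prodMk (measurable_pathShift.iterate i))
    (measurableSet_slowUpTo_norm_apply c N v)

lemma measure_stallSet_le (μ : Measure (GLd d)) [IsProbabilityMeasure μ] {ε : ENNReal}
    (hε : ∀ w : Ed d, w ≠ 0 → pathMeasure μ (slowUpTo c ‖w‖ N w) ≤ ε) (hv : v ≠ 0) (i : ℕ) :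
    pathMeasure μ (stallSet c N v i) ≤ ε :=
  calc pathMeasure μ (stallSet c N v i)
      = ∫⁻ g, pathMeasure μ (slowUpTo c ‖glCLM g v‖ N (glCLM g v)) ∂mconvN μ i := by
        have hmeas := measurableSet_slowUpTo_norm_apply c N v
        exact ((measurePreserving_pathProd_pathShift μ i).measure_preimage
          hmeas.nullMeasurableSet).trans (Measure.prod_apply hmeas)
    _ ≤ ∫⁻ _, ε ∂mconvN μ i := lintegral_mono fun g => hε _ (glCLM_ne_zero g hv)
    _ = ε := by simp

lemma exists_jump_of_notMem_stallSet (hv : v ≠ 0) {i : ℕ} {ω : ℕ → GLd d}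
    (hω : ω ∉ stallSet c N v i) : ∃ n, 0 < n ∧ n ≤ N ∧
      Real.log ‖glCLM (pathProd i ω) v‖ - c * i ≤
        Real.log ‖glCLM (pathProd (i + n) ω) v‖ - c * (i + n : ℕ) := by
  simp only [stallSet, slowUpTo, Set.mem_ofPred_eq, ← glCLM_mul_apply, ← pathProd_add] at hω
  push Not at hω
  obtain ⟨n, hnN, hn⟩ := hω
  have hpos : 0 < ‖glCLM (pathProd i ω) v‖ := norm_pos_iff.2 (glCLM_ne_zero _ hv)
  refine ⟨n, Nat.pos_of_ne_zero ?_, hnN, ?_⟩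
  · rintro rfl
    simp at hn
  · have hlog := Real.log_le_log (by positivity) hn.le
    rw [Real.log_mul hpos.ne' (Real.exp_pos _).ne', Real.log_exp] at hlog
    push_cast
    linarith

lemma le_logStretch_pathProd {K : ℝ} {ω : ℕ → GLd d} (hω : ∀ i, DistortionLE K (ω i))
    (hv : v ≠ 0) (L : ℕ) :
    c * L - (Real.log K + |c|) * (stallCount c N v L ω + N) ≤ logStretch (pathProd L ω) v := by
  have hstretch (i : ℕ) := (hω i).abs_logStretch_le (glCLM_ne_zero (pathProd i ω) hv)
  have h := sub_mul_le_of_step_of_jump (s := fun i => Real.log ‖glCLM (pathProd i ω) v‖ - c * i)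
    (b := fun i => (stallSet c N v i).indicator 1 ω) (K := Real.log K + |c|) (N := N)
    (add_nonneg ((abs_nonneg _).trans (hstretch 0)) (abs_nonneg c))
    (fun i => Set.indicator_nonneg (fun _ _ => zero_le_one) ω) (fun i => ?_) (fun i => ?_) L 0
  · rw [logStretch_eq_sub _ hv, stallCount]
    simp only [pathProd, glCLM_one, zero_add, Nat.cast_zero, mul_zero, sub_zero,
      one_apply_eq_self, ← Finset.range_eq_Ico] at h
    linarith
  · have hlow := (abs_le.1 (hstretch i)).1
    rw [logStretch_eq_sub _ (glCLM_ne_zero _ hv), ← glCLM_mul_apply, ← pathProd_succ'] at hlow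
    push_cast
    linarith [le_abs_self c]
  · by_cases hstall : ω ∈ stallSet c N v i
    · exact .inr (by simp [hstall])
    · exact .inl (exists_jump_of_notMem_stallSet hv hstall)

variable (μ : Measure (GLd d)) [IsProbabilityMeasure μ]

lemma integrable_indicator_stallSet (c : ℝ) (N : ℕ) (v : Ed d) (i : ℕ) :
    Integrable ((stallSet c N v i).indicator (1 : (ℕ → GLd d) → ℝ)) (pathMeasure μ) :=
  (integrable_const 1).indicator (measurableSet_stallSet c N v i)

lemma integrable_stallCount (c : ℝ) (N : ℕ) (v : Ed d) (L : ℕ) :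
    Integrable (stallCount c N v L) (pathMeasure μ) :=
  integrable_finsetSum _ fun i _ => integrable_indicator_stallSet μ c N v i

lemma integral_stallCount_le {ε : ℝ} (hε₀ : 0 ≤ ε)
    (hε : ∀ w : Ed d, w ≠ 0 → pathMeasure μ (slowUpTo c ‖w‖ N w) ≤ ENNReal.ofReal ε)
    (hv : v ≠ 0) (L : ℕ) : ∫ ω, stallCount c N v L ω ∂pathMeasure μ ≤ ε * L := by
  simp only [stallCount]
  rw [integral_finsetSum _ fun i _ => integrable_indicator_stallSet μ c N v i]
  refine (Finset.sum_le_card_nsmul _ _ ε fun i _ => ?_).trans_eq (by simp [mul_comm])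
  rw [integral_indicator_one (measurableSet_stallSet c N v i)]
  exact ENNReal.toReal_le_of_le_ofReal hε₀ (measure_stallSet_le μ hε hv i)

variable {μ}

lemma integrable_logStretch_mconvN {K : ℝ} (hK : ∀ᵐ g ∂μ, DistortionLE K g) (hv : v ≠ 0) (n : ℕ) :
    Integrable (fun g => logStretch g v) (mconvN μ n) :=
  .of_bound (measurable_logStretch v).aestronglyMeasurable _
    ((ae_mconvN_distortionLE hK n).mono fun _ hg => hg.abs_logStretch_le hv)

lemma le_integral_logStretch {K ε : ℝ} (hK : ∀ᵐ g ∂μ, DistortionLE K g) (hε₀ : 0 ≤ ε)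
    (hε : ∀ w : Ed d, w ≠ 0 → pathMeasure μ (slowUpTo c ‖w‖ N w) ≤ ENNReal.ofReal ε)
    (hv : v ≠ 0) (L : ℕ) :
    c * L - (Real.log K + |c|) * (ε * L + N) ≤ ∫ g, logStretch g v ∂mconvN μ L := by
  have hKω : ∀ᵐ ω ∂pathMeasure μ, ∀ i, DistortionLE K (ω i) := ae_all_iff.2 fun i =>
    (measurePreserving_eval_pathMeasure μ i).quasiMeasurePreserving.ae hK
  have hlogK : 0 ≤ Real.log K := by
    obtain ⟨g, hg⟩ := hK.exists
    exact (abs_nonneg _).trans (hg.abs_logStretch_le hv)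
  have hpath := measurePreserving_pathProd μ L
  have hcount : Integrable (fun ω => stallCount c N v L ω + N) (pathMeasure μ) :=
    (integrable_stallCount μ c N v L).add (integrable_const _)
  calc c * L - (Real.log K + |c|) * (ε * L + N)
      ≤ c * L - (Real.log K + |c|) * (∫ ω, stallCount c N v L ω ∂pathMeasure μ + N) := by
        gcongr
        exact integral_stallCount_le μ hε₀ hε hv L
    _ = ∫ ω, (c * L - (Real.log K + |c|) * (stallCount c N v L ω + N)) ∂pathMeasure μ := by
        rw [integral_sub (integrable_const _) (hcount.const_mul _), integral_const_mul (_ + _),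
          integral_add (integrable_stallCount μ c N v L) (integrable_const _)]
        simp
    _ ≤ ∫ ω, logStretch (pathProd L ω) v ∂pathMeasure μ :=
        integral_mono_ae ((integrable_const _).sub (hcount.const_mul _))
          (hpath.integrable_comp_of_integrable (integrable_logStretch_mconvN hK hv L))
          (hKω.mono fun ω hω => le_logStretch_pathProd hω hv L)
    _ = ∫ g, logStretch g v ∂mconvN μ L :=
        integral_comp_of_measurePreserving hpath (measurable_logStretch v).aestronglyMeasurable

end Stall

/-! ### Areas and the second exterior power -/

section Area

variable {E : Type*} [NormedAddCommGroup E] [InnerProductSpace ℝ E]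

/-- The area of the parallelogram spanned by two vectors, i.e. the norm of `u ∧ v`. -/
def area (u v : E) : ℝ := √(‖u‖ ^ 2 * ‖v‖ ^ 2 - (inner ℝ u v : ℝ) ^ 2)

lemma area_nonneg (u v : E) : 0 ≤ area u v := Real.sqrt_nonneg _

lemma area_comm (u v : E) : area u v = area v u := by
  rw [area, area, real_inner_comm, mul_comm]

@[simp] lemma area_self (u : E) : area u u = 0 := by
  rw [area, real_inner_self_eq_norm_sq, ← sq, sub_self, Real.sqrt_zero]

lemma area_le (u v : E) : area u v ≤ ‖u‖ * ‖v‖ := by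
  rw [area, ← mul_pow]
  exact Real.sqrt_le_iff.2 ⟨by positivity, sub_le_self _ (sq_nonneg _)⟩

lemma area_of_inner_eq_zero {u v : E} (h : (inner ℝ u v : ℝ) = 0) : area u v = ‖u‖ * ‖v‖ := by
  rw [area, h, ← mul_pow, zero_pow two_ne_zero, sub_zero, Real.sqrt_sq (by positivity)]

lemma area_sub_smul (u v : E) (t : ℝ) : area u (v - t • u) = area u v := by
  rw [area, area, inner_sub_right, inner_smul_right, real_inner_self_eq_norm_sq, norm_sub_sq_real,
    inner_smul_right, norm_smul, real_inner_comm, mul_pow, Real.norm_eq_abs, sq_abs]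
  congr 1
  ring

lemma area_smul_smul (a b : ℝ) (u v : E) : area (a • u) (b • v) = |a| * |b| * area u v := by
  have hsq : ‖a • u‖ ^ 2 * ‖b • v‖ ^ 2 - (inner ℝ (a • u) (b • v) : ℝ) ^ 2 =
      (|a| * |b|) ^ 2 * (‖u‖ ^ 2 * ‖v‖ ^ 2 - (inner ℝ u v : ℝ) ^ 2) := by
    simp only [norm_smul, real_inner_smul_left, inner_smul_right, Real.norm_eq_abs, mul_pow, sq_abs]
    ring
  rw [area, hsq, Real.sqrt_mul (sq_nonneg _), Real.sqrt_sq (by positivity), area]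

lemma area_smul_smul_div {a b : ℝ} (ha : a ≠ 0) (hb : b ≠ 0) (u v : E) :
    area (a • u) (b • v) / (‖a • u‖ * ‖b • v‖) = area u v / (‖u‖ * ‖v‖) := by
  have hab : |a| * |b| ≠ 0 := mul_ne_zero (abs_ne_zero.2 ha) (abs_ne_zero.2 hb)
  rw [area_smul_smul, norm_smul, norm_smul, Real.norm_eq_abs, Real.norm_eq_abs, mul_mul_mul_comm,
    mul_div_mul_left _ _ hab]

lemma inner_sub_inner_div_smul_eq_zero (u v : E) :
    (inner ℝ u (v - ((inner ℝ u v : ℝ) / ‖u‖ ^ 2) • u) : ℝ) = 0 := by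
  rcases eq_or_ne u 0 with rfl | hu
  · exact inner_zero_left _
  rw [inner_sub_right, inner_smul_right, real_inner_self_eq_norm_sq,
    div_mul_cancel₀ _ (pow_ne_zero 2 (norm_ne_zero_iff.2 hu)), sub_self]

lemma norm_sub_le_two_mul_area {u v : E} (hu : ‖u‖ = 1) (hv : ‖v‖ = 1)
    (huv : 0 ≤ (inner ℝ u v : ℝ)) : ‖u - v‖ ≤ 2 * area u v := by
  have hle : (inner ℝ u v : ℝ) ≤ 1 := by simpa [hu, hv] using real_inner_le_norm u v
  refine abs_le_of_sq_le_sq' ?_ (mul_nonneg zero_le_two (area_nonneg u v)) |>.2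
  rw [norm_sub_sq_real, mul_pow, area, Real.sq_sqrt] <;> rw [hu, hv] <;> nlinarith

lemma continuous_area {X : Type*} [TopologicalSpace X] {f g : X → E} (hf : Continuous f)
    (hg : Continuous g) : Continuous fun x => area (f x) (g x) :=
  (((hf.norm.pow 2).mul (hg.norm.pow 2)).sub ((hf.inner hg).pow 2)).sqrt

end Area

lemma exists_norm_eq_one_of_inner_eq_zero (hd : 2 ≤ d) :
    ∃ p q : Ed d, ‖p‖ = 1 ∧ ‖q‖ = 1 ∧ (inner ℝ p q : ℝ) = 0 := by
  refine ⟨EuclideanSpace.single ⟨0, by omega⟩ 1, EuclideanSpace.single ⟨1, by omega⟩ 1, ?_⟩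
  simp [EuclideanSpace.inner_single_left]

/-- The areas of the images under `g` of the unit squares; their supremum is `N2 g`. -/
def squareAreas (g : GLd d) : Set ℝ :=
  {x | ∃ p q : Ed d, ‖p‖ = 1 ∧ ‖q‖ = 1 ∧ (inner ℝ p q : ℝ) = 0 ∧ x = area (glCLM g p) (glCLM g q)}

lemma squareAreas_nonempty (hd : 2 ≤ d) (g : GLd d) : (squareAreas g).Nonempty := by
  obtain ⟨p, q, hp, hq, hpq⟩ := exists_norm_eq_one_of_inner_eq_zero hd
  exact ⟨_, p, q, hp, hq, hpq, rfl⟩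

lemma le_sq_of_mem_squareAreas {R : ℝ} {g : GLd d} (hg : gnorm g ≤ R) {x : ℝ}
    (hx : x ∈ squareAreas g) : x ≤ R ^ 2 := by
  obtain ⟨p, q, hp, hq, -, rfl⟩ := hx
  have hgp : ‖glCLM g p‖ ≤ R := by simpa [hp] using (glCLM g).le_of_opNorm_le hg p
  have hgq : ‖glCLM g q‖ ≤ R := by simpa [hq] using (glCLM g).le_of_opNorm_le hg q
  calc area (glCLM g p) (glCLM g q) ≤ ‖glCLM g p‖ * ‖glCLM g q‖ := area_le _ _
    _ ≤ R * R := mul_le_mul hgp hgq (norm_nonneg _) ((norm_nonneg _).trans hgp)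
    _ = R ^ 2 := (sq R).symm

lemma area_glCLM_le_N2 (g : GLd d) {p q : Ed d} (hp : ‖p‖ = 1) (hq : ‖q‖ = 1)
    (hpq : (inner ℝ p q : ℝ) = 0) : area (glCLM g p) (glCLM g q) ≤ N2 g :=
  le_csSup ⟨_, fun _ => le_sq_of_mem_squareAreas (le_refl (gnorm g))⟩ ⟨p, q, hp, hq, hpq, rfl⟩

lemma N2_nonneg (g : GLd d) : 0 ≤ N2 g :=
  Real.sSup_nonneg fun _ ⟨_, _, _, _, _, hx⟩ => hx ▸ area_nonneg _ _

lemma area_glCLM_le_of_inner_eq_zero (g : GLd d) {u v : Ed d} (huv : (inner ℝ u v : ℝ) = 0) :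
    area (glCLM g u) (glCLM g v) ≤ N2 g * (‖u‖ * ‖v‖) := by
  rcases eq_or_ne u 0 with rfl | hu
  · simp [area]
  rcases eq_or_ne v 0 with rfl | hv
  · simp [area]
  have hu₀ : 0 < ‖u‖ := norm_pos_iff.2 hu
  have hv₀ : 0 < ‖v‖ := norm_pos_iff.2 hv
  have hN : area (glCLM g (‖u‖⁻¹ • u)) (glCLM g (‖v‖⁻¹ • v)) ≤ N2 g :=
    area_glCLM_le_N2 g (by simp [norm_smul, hu]) (by simp [norm_smul, hv])
      (by simp [real_inner_smul_left, inner_smul_right, huv])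
  rwa [map_smul, map_smul, area_smul_smul, abs_of_pos (inv_pos.2 hu₀), abs_of_pos (inv_pos.2 hv₀),
    ← mul_inv, inv_mul_le_iff₀ (mul_pos hu₀ hv₀), mul_comm] at hN

lemma area_glCLM_le (g : GLd d) (u v : Ed d) :
    area (glCLM g u) (glCLM g v) ≤ N2 g * area u v := by
  have hperp := inner_sub_inner_div_smul_eq_zero u v
  calc area (glCLM g u) (glCLM g v)
      = area (glCLM g u) (glCLM g (v - ((inner ℝ u v : ℝ) / ‖u‖ ^ 2) • u)) := by
        rw [map_sub, map_smul, area_sub_smul]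
    _ ≤ N2 g * (‖u‖ * ‖v - ((inner ℝ u v : ℝ) / ‖u‖ ^ 2) • u‖) :=
        area_glCLM_le_of_inner_eq_zero g hperp
    _ = N2 g * area u v := by rw [← area_of_inner_eq_zero hperp, area_sub_smul]

lemma N2_le_sq {R : ℝ} {g : GLd d} (hg : gnorm g ≤ R) : N2 g ≤ R ^ 2 :=
  Real.sSup_le (fun _ => le_sq_of_mem_squareAreas hg) (sq_nonneg R)

lemma N2_mul_le (g h : GLd d) : N2 (g * h) ≤ N2 g * N2 h := by
  refine Real.sSup_le ?_ (mul_nonneg (N2_nonneg g) (N2_nonneg h))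
  rintro _ ⟨p, q, hp, hq, hpq, rfl⟩
  rw [glCLM_mul_apply, glCLM_mul_apply]
  exact (area_glCLM_le g _ _).trans
    (mul_le_mul_of_nonneg_left (area_glCLM_le_N2 h hp hq hpq) (N2_nonneg g))

lemma one_le_N2_inv_mul_N2 (hd : 2 ≤ d) (g : GLd d) : 1 ≤ N2 g⁻¹ * N2 g := by
  obtain ⟨p, q, hp, hq, hpq⟩ := exists_norm_eq_one_of_inner_eq_zero hd
  calc (1 : ℝ) = area (glCLM g⁻¹ (glCLM g p)) (glCLM g⁻¹ (glCLM g q)) := by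
        rw [glCLM_leftInv, glCLM_leftInv, area_of_inner_eq_zero hpq, hp, hq, mul_one]
    _ ≤ N2 g⁻¹ * area (glCLM g p) (glCLM g q) := area_glCLM_le _ _ _
    _ ≤ N2 g⁻¹ * N2 g := mul_le_mul_of_nonneg_left (area_glCLM_le_N2 g hp hq hpq) (N2_nonneg _)

lemma N2_pos (hd : 2 ≤ d) (g : GLd d) : 0 < N2 g :=
  pos_of_mul_pos_right (one_pos.trans_le (one_le_N2_inv_mul_N2 hd g)) (N2_nonneg _)

lemma DistortionLE.abs_log_N2_le (hd : 2 ≤ d) {R : ℝ} {g : GLd d} (hg : DistortionLE R g) :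
    |Real.log (N2 g)| ≤ 2 * Real.log R := by
  have hlower : 1 ≤ R ^ 2 * N2 g := (one_le_N2_inv_mul_N2 hd g).trans
    (mul_le_mul_of_nonneg_right (N2_le_sq hg.2) (N2_nonneg g))
  have hR : 0 < R ^ 2 := pos_of_mul_pos_left (one_pos.trans_le hlower) (N2_nonneg g)
  calc |Real.log (N2 g)| ≤ Real.log (R ^ 2) :=
        abs_log_le_log hR ((inv_le_iff_one_le_mul₀' hR).2 hlower) (N2_le_sq hg.1)
    _ = 2 * Real.log R := by rw [Real.log_pow, Nat.cast_two]

lemma measurable_N2 (hd : 2 ≤ d) : Measurable (N2 : GLd d → ℝ) := by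
  refine LowerSemicontinuous.measurable fun g a hag => ?_
  obtain ⟨_, ⟨p, q, hp, hq, hpq, rfl⟩, hx⟩ := exists_lt_of_lt_csSup (squareAreas_nonempty hd g) hag
  have hcont := continuous_area (continuous_glCLM_apply p) (continuous_glCLM_apply q)
  filter_upwards [(hcont.tendsto g).eventually_const_lt hx] with h hh
  exact hh.trans_le (area_glCLM_le_N2 h hp hq hpq)

section

variable {μ : Measure (GLd d)} [IsProbabilityMeasure μ] {K : ℝ}

lemma ae_mconvN_abs_log_N2_le (hd : 2 ≤ d) (hK : ∀ᵐ g ∂μ, DistortionLE K g) (n : ℕ) :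
    ∀ᵐ g ∂mconvN μ n, |Real.log (N2 g)| ≤ n * (2 * Real.log K) := by
  filter_upwards [ae_mconvN_distortionLE hK n] with g hg
  rw [mul_left_comm, ← Real.log_pow]
  exact hg.abs_log_N2_le hd

lemma tendsto_L12 (hd : 2 ≤ d) (hK : ∀ᵐ g ∂μ, DistortionLE K g) :
    Tendsto (fun n : ℕ => (n : ℝ)⁻¹ * ∫ g, Real.log (N2 g) ∂mconvN μ n) atTop (nhds (L12 μ)) := by
  refine tendsto_nhds_limUnder (exists_tendsto_integral_mconvN (measurable_N2 hd).log
    (ae_mconvN_abs_log_N2_le hd hK) fun m n => Eventually.of_forall fun p => ?_)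
  rw [← Real.log_mul (N2_pos hd _).ne' (N2_pos hd _).ne']
  exact Real.log_le_log (N2_pos hd _) (N2_mul_le _ _)

end

/-! ### The projective action -/

lemma pdelta_eq_area_div (x y : Pd d) :
    pdelta x y = area x.rep y.rep / (‖x.rep‖ * ‖y.rep‖) := rfl

lemma pdelta_nonneg (x y : Pd d) : 0 ≤ pdelta x y :=
  div_nonneg (area_nonneg _ _) (by positivity)

lemma pdelta_le_one (x y : Pd d) : pdelta x y ≤ 1 :=
  div_le_one_of_le₀ (area_le _ _) (by positivity)

lemma pdelta_comm (x y : Pd d) : pdelta x y = pdelta y x := by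
  rw [pdelta_eq_area_div, pdelta_eq_area_div, area_comm, mul_comm ‖x.rep‖]

@[simp] lemma pdelta_self (x : Pd d) : pdelta x x = 0 := by
  rw [pdelta_eq_area_div, area_self, zero_div]

lemma pdelta_mk {u v : Ed d} (hu : u ≠ 0) (hv : v ≠ 0) :
    pdelta (Projectivization.mk ℝ u hu) (Projectivization.mk ℝ v hv) =
      area u v / (‖u‖ * ‖v‖) := by
  obtain ⟨a, ha⟩ := Projectivization.exists_smul_eq_mk_rep ℝ u hu
  obtain ⟨b, hb⟩ := Projectivization.exists_smul_eq_mk_rep ℝ v hv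
  rw [pdelta_eq_area_div, ← ha, ← hb]
  exact area_smul_smul_div a.ne_zero b.ne_zero u v

lemma pact_mk (g : GLd d) {u : Ed d} (hu : u ≠ 0) :
    pact g (Projectivization.mk ℝ u hu) =
      Projectivization.mk ℝ (glCLM g u) (glCLM_ne_zero g hu) := rfl

lemma pact_eq_mk_rep (g : GLd d) (x : Pd d) :
    pact g x = Projectivization.mk ℝ (glCLM g x.rep) (glCLM_ne_zero g x.rep_nonzero) := by
  rw [← pact_mk g x.rep_nonzero, Projectivization.mk_rep]

lemma pact_mul (g h : GLd d) (x : Pd d) : pact (g * h) x = pact g (pact h x) := by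
  simp only [pact_eq_mk_rep _ x, pact_mk, glCLM_mul_apply]

@[simp] lemma pact_one (x : Pd d) : pact 1 x = x := by simp [pact_eq_mk_rep]

lemma continuous_pact (x : Pd d) : Continuous fun g : GLd d => pact g x := by
  simp only [pact_eq_mk_rep]
  exact continuous_quot_mk.comp ((continuous_glCLM_apply x.rep).subtype_mk _)

/-- The logarithm of an upper bound for the factor by which `g` expands `pdelta x y`. -/
def logExpansion (x y : Pd d) (g : GLd d) : ℝ :=
  Real.log (N2 g) - logStretch g x.rep - logStretch g y.rep

lemma measurable_logExpansion (hd : 2 ≤ d) (x y : Pd d) : Measurable (logExpansion x y) :=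
  ((measurable_N2 hd).log.sub (measurable_logStretch _)).sub (measurable_logStretch _)

lemma DistortionLE.abs_logExpansion_le (hd : 2 ≤ d) {R : ℝ} {g : GLd d} (hg : DistortionLE R g)
    (x y : Pd d) : |logExpansion x y g| ≤ 4 * Real.log R := by
  have hN := abs_le.1 (hg.abs_log_N2_le hd)
  have hx := abs_le.1 (hg.abs_logStretch_le x.rep_nonzero)
  have hy := abs_le.1 (hg.abs_logStretch_le y.rep_nonzero)
  rw [logExpansion, abs_le]
  constructor <;> linarith

lemma exp_logExpansion (hd : 2 ≤ d) (x y : Pd d) (g : GLd d) :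
    Real.exp (logExpansion x y g) =
      N2 g * (‖x.rep‖ * ‖y.rep‖) / (‖glCLM g x.rep‖ * ‖glCLM g y.rep‖) := by
  have hx := norm_pos_iff.2 x.rep_nonzero
  have hy := norm_pos_iff.2 y.rep_nonzero
  have hgx := norm_pos_iff.2 (glCLM_ne_zero g x.rep_nonzero)
  have hgy := norm_pos_iff.2 (glCLM_ne_zero g y.rep_nonzero)
  rw [logExpansion, logStretch, logStretch, Real.exp_sub, Real.exp_sub,
    Real.exp_log (N2_pos hd g), Real.exp_log (div_pos hgx hx), Real.exp_log (div_pos hgy hy)]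
  field_simp

lemma pdelta_pact_le (hd : 2 ≤ d) (g : GLd d) (x y : Pd d) :
    pdelta (pact g x) (pact g y) ≤ Real.exp (logExpansion x y g) * pdelta x y := by
  have hx := norm_ne_zero_iff.2 x.rep_nonzero
  have hy := norm_ne_zero_iff.2 y.rep_nonzero
  calc pdelta (pact g x) (pact g y)
      = area (glCLM g x.rep) (glCLM g y.rep) / (‖glCLM g x.rep‖ * ‖glCLM g y.rep‖) := by
        rw [pact_eq_mk_rep, pact_eq_mk_rep, pdelta_mk]
    _ ≤ N2 g * area x.rep y.rep / (‖glCLM g x.rep‖ * ‖glCLM g y.rep‖) := by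
        gcongr
        exact area_glCLM_le _ _ _
    _ = Real.exp (logExpansion x y g) * pdelta x y := by
        rw [exp_logExpansion hd, pdelta_eq_area_div]
        field_simp

/-! ### Hölder observables -/

/-- `φ` is `α`-Hölder with constant `C` with respect to the projective distance `pdelta`. -/
def IsHolderWith (α C : ℝ) (φ : Pd d → ℝ) : Prop := ∀ x y, |φ x - φ y| ≤ C * pdelta x y ^ α

lemma continuous_pdelta_mk {v : Ed d} (hv : v ≠ 0) :
    Continuous fun u : {u : Ed d // u ≠ 0} =>
      pdelta (Projectivization.mk ℝ u.1 u.2) (Projectivization.mk ℝ v hv) := by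
  simp only [pdelta_mk]
  refine (continuous_area continuous_subtype_val continuous_const).div
    (continuous_subtype_val.norm.mul continuous_const) fun u => ?_
  exact mul_ne_zero (norm_ne_zero_iff.2 u.2) (norm_ne_zero_iff.2 hv)

namespace IsHolderWith

variable {α C : ℝ} {φ : Pd d → ℝ}

lemma continuous (hα : 0 < α) (hφ : IsHolderWith α C φ) : Continuous φ := by
  refine isQuotientMap_quot_mk.continuous_iff.2 (continuous_iff_continuousAt.2 fun v => ?_)
  have hlim : Tendsto (fun u : {u : Ed d // u ≠ 0} =>
      C * pdelta (.mk ℝ u.1 u.2) (.mk ℝ v.1 v.2) ^ α) (nhds v) (nhds 0) := by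
    simpa only [pdelta_self, Real.zero_rpow hα.ne', mul_zero] using
      (((continuous_pdelta_mk v.2).rpow_const fun _ => Or.inr hα.le).tendsto v).const_mul C
  rw [ContinuousAt, tendsto_iff_norm_sub_tendsto_zero]
  exact squeeze_zero (fun _ => norm_nonneg _) (fun _ => hφ _ _) hlim

lemma abs_sub_le_const (hα : 0 ≤ α) (hC : 0 ≤ C) (hφ : IsHolderWith α C φ) (x y : Pd d) :
    |φ x - φ y| ≤ C :=
  (hφ x y).trans (mul_le_of_le_one_right hC
    (Real.rpow_le_one (pdelta_nonneg x y) (pdelta_le_one x y) hα))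

end IsHolderWith

lemma DistortionLE.log_norm_sub_log_norm_le {K : ℝ} {g : GLd d} (hg : DistortionLE K g)
    {u v : Ed d} (hu : ‖u‖ = 1) (hv : ‖v‖ = 1) (huv : 0 ≤ (inner ℝ u v : ℝ)) :
    Real.log ‖glCLM g u‖ - Real.log ‖glCLM g v‖ ≤ 2 * K ^ 2 * area u v := by
  have hgu : 0 < ‖glCLM g u‖ := norm_pos_iff.2 (glCLM_ne_zero g (norm_ne_zero_iff.1 (by simp [hu])))
  have hgv : 0 < ‖glCLM g v‖ := norm_pos_iff.2 (glCLM_ne_zero g (norm_ne_zero_iff.1 (by simp [hv])))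
  have hdiff : ‖glCLM g u‖ - ‖glCLM g v‖ ≤ K * (2 * area u v) :=
    calc ‖glCLM g u‖ - ‖glCLM g v‖ ≤ ‖glCLM g (u - v)‖ := by
          rw [map_sub]; exact norm_sub_norm_le _ _
      _ ≤ K * ‖u - v‖ := hg.norm_apply_le _
      _ ≤ K * (2 * area u v) :=
          mul_le_mul_of_nonneg_left (norm_sub_le_two_mul_area hu hv huv) hg.nonneg
  have hone : 1 ≤ K * ‖glCLM g v‖ := hv ▸ hg.norm_le_apply v
  rw [← Real.log_div hgu.ne' hgv.ne']
  calc Real.log (‖glCLM g u‖ / ‖glCLM g v‖) ≤ ‖glCLM g u‖ / ‖glCLM g v‖ - 1 :=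
        Real.log_le_sub_one_of_pos (div_pos hgu hgv)
    _ = (‖glCLM g u‖ - ‖glCLM g v‖) / ‖glCLM g v‖ := div_sub_one hgv.ne'
    _ ≤ K * (2 * area u v) * (K * ‖glCLM g v‖) / ‖glCLM g v‖ := by
        gcongr
        refine hdiff.trans (le_mul_of_one_le_right ?_ hone)
        exact mul_nonneg hg.nonneg (mul_nonneg zero_le_two (area_nonneg u v))
    _ = 2 * K ^ 2 * area u v := by field_simp

lemma exists_smul_norm_eq_one_inner_nonneg (u : Ed d) {v : Ed d} (hv : v ≠ 0) :
    ∃ b : ℝ, b ≠ 0 ∧ ‖b • v‖ = 1 ∧ 0 ≤ (inner ℝ u (b • v) : ℝ) := by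
  have hv₀ : 0 < ‖v‖ := norm_pos_iff.2 hv
  rcases le_total 0 (inner ℝ u v : ℝ) with h | h
  · refine ⟨‖v‖⁻¹, (inv_pos.2 hv₀).ne', by simp [norm_smul, hv], ?_⟩
    rw [inner_smul_right]
    positivity
  · refine ⟨-‖v‖⁻¹, neg_ne_zero.2 (inv_pos.2 hv₀).ne', by simp [norm_smul, hv], ?_⟩
    rw [inner_smul_right]
    exact mul_nonneg_of_nonpos_of_nonpos (neg_nonpos.2 (inv_pos.2 hv₀).le) h

lemma DistortionLE.logStretch_sub_le {K : ℝ} {g : GLd d} (hg : DistortionLE K g) (x y : Pd d) :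
    logStretch g x.rep - logStretch g y.rep ≤ 2 * K ^ 2 * pdelta x y := by
  have hx : x.rep ≠ 0 := x.rep_nonzero
  have ha : ‖x.rep‖⁻¹ ≠ 0 := inv_ne_zero (norm_ne_zero_iff.2 hx)
  have hu : ‖‖x.rep‖⁻¹ • x.rep‖ = 1 := by simp [norm_smul, hx]
  obtain ⟨b, hb, hv, huv⟩ :=
    exists_smul_norm_eq_one_inner_nonneg (‖x.rep‖⁻¹ • x.rep) y.rep_nonzero
  have hlog := hg.log_norm_sub_log_norm_le hu hv huv
  rw [pdelta_eq_area_div, ← area_smul_smul_div ha hb, ← logStretch_smul g ha,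
    ← logStretch_smul g hb y.rep, logStretch, logStretch, hu, hv]
  simpa using hlog

lemma DistortionLE.abs_logStretch_sub_le {K : ℝ} {g : GLd d} (hg : DistortionLE K g) (x y : Pd d) :
    |logStretch g x.rep - logStretch g y.rep| ≤ 2 * K ^ 2 * pdelta x y := by
  refine abs_sub_le_iff.2 ⟨hg.logStretch_sub_le x y, ?_⟩
  rw [pdelta_comm]
  exact hg.logStretch_sub_le y x

lemma isHolderWith_phiObs {μ : Measure (GLd d)} [IsProbabilityMeasure μ] {K : ℝ}
    (hK : ∀ᵐ g ∂μ, DistortionLE K g) {α : ℝ} (hα : α ≤ 1) :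
    IsHolderWith α (2 * K ^ 2) (phiObs μ) := by
  intro x y
  have hint : ∀ v : Pd d, Integrable (fun g => logStretch g v.rep) μ := fun v =>
    .of_bound (measurable_logStretch _).aestronglyMeasurable (Real.log K) <|
      hK.mono fun g hg => hg.abs_logStretch_le v.rep_nonzero
  have hpow : pdelta x y ≤ pdelta x y ^ α := by
    simpa only [Real.rpow_one] using Real.rpow_le_rpow_of_exponent_ge_of_imp (pdelta_nonneg x y)
      (pdelta_le_one x y) hα fun _ h => absurd h one_ne_zero
  calc |phiObs μ x - phiObs μ y|
      = |∫ g, (logStretch g x.rep - logStretch g y.rep) ∂μ| := by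
        rw [integral_sub (hint x) (hint y)]; rfl
    _ ≤ 2 * K ^ 2 * pdelta x y :=
        abs_integral_le_of_ae_abs_le (hK.mono fun g hg => hg.abs_logStretch_sub_le x y)
    _ ≤ 2 * K ^ 2 * pdelta x y ^ α := by gcongr

/-! ### Total variation -/

section TotalVariation

variable {Ω : Type*} [MeasurableSpace Ω] {f : Ω → ℝ} {M : ℝ}

lemma exists_add_eq_add_totalVariation (μ ν : Measure Ω) [IsFiniteMeasure μ] [IsFiniteMeasure ν] :
    ∃ p n : Measure Ω, IsFiniteMeasure p ∧ IsFiniteMeasure n ∧ μ + n = ν + p ∧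
      (μ.toSignedMeasure - ν.toSignedMeasure).totalVariation = p + n := by
  set s := μ.toSignedMeasure - ν.toSignedMeasure with hs
  refine ⟨s.toJordanDecomposition.posPart, s.toJordanDecomposition.negPart, inferInstance,
    inferInstance, ?_, rfl⟩
  have hjordan := s.toSignedMeasure_toJordanDecomposition
  rw [JordanDecomposition.toSignedMeasure, hs, sub_eq_sub_iff_add_eq_add] at hjordan
  rw [← Measure.toSignedMeasure_eq_toSignedMeasure_iff, Measure.toSignedMeasure_add,
    Measure.toSignedMeasure_add, ← hjordan, add_comm]

lemma abs_integral_sub_integral_le (μ ν : Measure Ω) [IsFiniteMeasure μ] [IsFiniteMeasure ν]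
    (hf : Measurable f) (hM : ∀ ω, |f ω| ≤ M) :
    |∫ ω, f ω ∂μ - ∫ ω, f ω ∂ν| ≤
      M * (μ.toSignedMeasure - ν.toSignedMeasure).totalVariation.real Set.univ := by
  obtain ⟨p, n, _, _, hpn, htv⟩ := exists_add_eq_add_totalVariation μ ν
  have hint (m : Measure Ω) [IsFiniteMeasure m] : Integrable f m :=
    .of_bound hf.aestronglyMeasurable M (Eventually.of_forall hM)
  have hsum := congrArg (fun m => ∫ ω, f ω ∂m) hpn
  simp only [integral_add_measure (hint _) (hint _)] at hsum
  have hdiff : ∫ ω, f ω ∂μ - ∫ ω, f ω ∂ν = ∫ ω, f ω ∂p - ∫ ω, f ω ∂n := by linarith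
  have hbound (m : Measure Ω) [IsFiniteMeasure m] : |∫ ω, f ω ∂m| ≤ M * m.real Set.univ :=
    norm_integral_le_of_norm_le_const (f := f) (Eventually.of_forall hM)
  rw [hdiff, htv, measureReal_add_apply, mul_add]
  exact (abs_sub _ _).trans (add_le_add (hbound p) (hbound n))

end TotalVariation

section

variable (μ ν : Measure (GLd d)) [IsProbabilityMeasure μ] [IsProbabilityMeasure ν]

lemma integral_mconvN_succ {f : GLd d → ℝ} {M : ℝ} (hf : Measurable f) (hM : ∀ g, |f g| ≤ M)
    (n : ℕ) : ∫ g, f g ∂mconvN μ (n + 1) = ∫ g, ∫ h, f (g * h) ∂μ ∂mconvN μ n := by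
  rw [mconvN_succ, mconv, integral_map (by fun_prop) hf.aestronglyMeasurable, integral_prod]
  exact .of_bound (hf.comp measurable_mul).aestronglyMeasurable M
    (Eventually.of_forall fun _ => hM _)

lemma abs_integral_mconvN_sub_le (n : ℕ) {f : GLd d → ℝ} {M : ℝ} (hf : Measurable f)
    (hM : ∀ g, |f g| ≤ M) :
    |∫ g, f g ∂mconvN μ n - ∫ g, f g ∂mconvN ν n| ≤ n * (M * tvDist μ ν) := by
  induction n generalizing f with
  | zero => simp
  | succ n ih =>
    have hmeas (m : Measure (GLd d)) [IsProbabilityMeasure m] :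
        Measurable fun g => ∫ h, f (g * h) ∂m :=
      (StronglyMeasurable.integral_prod_right (f := fun g h => f (g * h))
        (hf.comp measurable_mul).stronglyMeasurable).measurable
    have hbound (m : Measure (GLd d)) [IsProbabilityMeasure m] (g : GLd d) :
        |∫ h, f (g * h) ∂m| ≤ M :=
      abs_integral_le_of_ae_abs_le (Eventually.of_forall fun _ => hM _)
    have hint (m : Measure (GLd d)) [IsProbabilityMeasure m] :
        Integrable (fun g => ∫ h, f (g * h) ∂m) (mconvN μ n) :=
      .of_bound (hmeas m).aestronglyMeasurable M (Eventually.of_forall (hbound m))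
    have hlast : |∫ g, ∫ h, f (g * h) ∂μ ∂mconvN μ n - ∫ g, ∫ h, f (g * h) ∂ν ∂mconvN μ n| ≤
        M * tvDist μ ν := by
      rw [← integral_sub (hint μ) (hint ν)]
      exact abs_integral_le_of_ae_abs_le <| Eventually.of_forall fun g =>
        abs_integral_sub_integral_le μ ν (hf.comp (measurable_const_mul g)) fun _ => hM _
    rw [integral_mconvN_succ μ hf hM, integral_mconvN_succ ν hf hM]
    calc _ ≤ M * tvDist μ ν + n * (M * tvDist μ ν) :=
          (abs_sub_le _ _ _).trans (add_le_add hlast (ih (hmeas ν) (hbound ν)))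
      _ = (n + 1 : ℕ) * (M * tvDist μ ν) := by push_cast; ring

variable {μ ν}

lemma abs_integral_mconvN_sub_le_of_ae {n : ℕ} {f : GLd d → ℝ} {M : ℝ} (hf : Measurable f)
    (hμ : ∀ᵐ g ∂mconvN μ n, |f g| ≤ M) (hν : ∀ᵐ g ∂mconvN ν n, |f g| ≤ M) :
    |∫ g, f g ∂mconvN μ n - ∫ g, f g ∂mconvN ν n| ≤ n * (M * tvDist μ ν) := by
  have hM : 0 ≤ M := let ⟨_, hg⟩ := hμ.exists; (abs_nonneg _).trans hg
  set s := {g | |f g| ≤ M}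
  have hs : MeasurableSet s := measurableSet_le hf.abs measurable_const
  have htrunc (g : GLd d) : |s.indicator f g| ≤ M := by
    by_cases hg : g ∈ s
    · rwa [Set.indicator_of_mem hg]
    · rwa [Set.indicator_of_notMem hg, abs_zero]
  have hcongr {m : Measure (GLd d)} (hm : ∀ᵐ g ∂m, |f g| ≤ M) :
      ∫ g, s.indicator f g ∂m = ∫ g, f g ∂m :=
    integral_congr_ae (hm.mono fun g hg => Set.indicator_of_mem (show g ∈ s from hg) f)
  simpa only [hcongr hμ, hcongr hν] using
    abs_integral_mconvN_sub_le μ ν n (hf.indicator hs) htrunc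

end

/-! ### Iterates of the Markov operator -/

open ProbabilityTheory (mgf)

lemma iterate_Qop_apply (μ : Measure (GLd d)) [IsProbabilityMeasure μ] {φ : Pd d → ℝ} {M : ℝ}
    (hφ : Measurable φ) (hM : ∀ x, |φ x| ≤ M) (n : ℕ) (v : Pd d) :
    (Qop μ)^[n] φ v = ∫ g, φ (pact g v) ∂mconvN μ n := by
  have hmeas (v : Pd d) : Measurable fun g : GLd d => φ (pact g v) :=
    hφ.comp (continuous_pact v).measurable
  induction n generalizing v with
  | zero =>
    rw [mconvN_zero, integral_dirac' _ _ (hmeas v).stronglyMeasurable, pact_one]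
    rfl
  | succ n ih =>
    have hint : Integrable (fun p : GLd d × GLd d => φ (pact (p.1 * p.2) v))
        ((mconvN μ n).prod μ) :=
      .of_bound ((hmeas v).comp measurable_mul).aestronglyMeasurable M
        (Eventually.of_forall fun _ => hM _)
    calc (Qop μ)^[n + 1] φ v = ∫ h, ∫ g, φ (pact (g * h) v) ∂mconvN μ n ∂μ := by
          simp only [Function.iterate_succ_apply', Qop, ih, pact_mul]
      _ = ∫ p, φ (pact (p.1 * p.2) v) ∂(mconvN μ n).prod μ := (integral_prod_symm _ hint).symm
      _ = ∫ g, φ (pact g v) ∂mconvN μ (n + 1) := by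
          rw [mconvN_succ, mconv,
            integral_map (by fun_prop) (hmeas v).aestronglyMeasurable]

namespace IsHolderWith

variable {α C : ℝ} {φ : Pd d → ℝ}

lemma abs_apply_le (hα : 0 ≤ α) (hC : 0 ≤ C) (hφ : IsHolderWith α C φ) (x y : Pd d) :
    |φ y| ≤ |φ x| + C := by
  linarith [abs_sub_abs_le_abs_sub (φ y) (φ x), hφ.abs_sub_le_const hα hC y x]

lemma integrable_comp_pact (hα : 0 < α) (hC : 0 ≤ C) (hφ : IsHolderWith α C φ)
    (ν : Measure (GLd d)) [IsFiniteMeasure ν] (v : Pd d) :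
    Integrable (fun g => φ (pact g v)) ν :=
  .of_bound ((hφ.continuous hα).comp (continuous_pact v)).aestronglyMeasurable (|φ v| + C)
    (Eventually.of_forall fun _ => hφ.abs_apply_le hα.le hC _ _)

lemma iterate_Qop_apply (hα : 0 < α) (hC : 0 ≤ C) (hφ : IsHolderWith α C φ)
    (μ : Measure (GLd d)) [IsProbabilityMeasure μ] (n : ℕ) (v : Pd d) :
    (Qop μ)^[n] φ v = ∫ g, φ (pact g v) ∂mconvN μ n :=
  _root_.iterate_Qop_apply μ (hφ.continuous hα).measurable (hφ.abs_apply_le hα.le hC v) n v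

lemma abs_iterate_Qop_sub_le (hα : 0 < α) (hC : 0 ≤ C) (hφ : IsHolderWith α C φ)
    (μ : Measure (GLd d)) [IsProbabilityMeasure μ] (n : ℕ) (v : Pd d) :
    |(Qop μ)^[n] φ v - φ v| ≤ C := by
  have hsub : (Qop μ)^[n] φ v - φ v = ∫ g, (φ (pact g v) - φ v) ∂mconvN μ n := by
    rw [hφ.iterate_Qop_apply hα hC, integral_sub (hφ.integrable_comp_pact hα hC _ v)
      (integrable_const _), integral_const, probReal_univ, one_smul]
  rw [hsub]
  exact abs_integral_le_of_ae_abs_le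
    (Eventually.of_forall fun g => hφ.abs_sub_le_const hα.le hC _ _)

lemma integral_comp_pact (hd : 2 ≤ d) (hα : 0 < α) (hC : 0 ≤ C) (hφ : IsHolderWith α C φ)
    {ν : Measure (GLd d)} [IsFiniteMeasure ν] {ρ : ℝ}
    (hint : ∀ x y : Pd d, Integrable (fun g => Real.exp (α * logExpansion x y g)) ν)
    (hρ : ∀ x y : Pd d, mgf (logExpansion x y) ν α ≤ ρ) :
    IsHolderWith α (ρ * C) fun v => ∫ g, φ (pact g v) ∂ν := by
  intro x y
  have hpt (g : GLd d) : |φ (pact g x) - φ (pact g y)| ≤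
      C * pdelta x y ^ α * Real.exp (α * logExpansion x y g) :=
    calc |φ (pact g x) - φ (pact g y)| ≤ C * pdelta (pact g x) (pact g y) ^ α := hφ _ _
      _ ≤ C * (Real.exp (logExpansion x y g) * pdelta x y) ^ α := by
          gcongr
          exacts [pdelta_nonneg _ _, pdelta_pact_le hd g x y]
      _ = C * pdelta x y ^ α * Real.exp (α * logExpansion x y g) := by
          rw [Real.mul_rpow (Real.exp_pos _).le (pdelta_nonneg _ _), ← Real.exp_mul,
            mul_comm (logExpansion x y g)]
          ring
  calc |∫ g, φ (pact g x) ∂ν - ∫ g, φ (pact g y) ∂ν|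
      = |∫ g, (φ (pact g x) - φ (pact g y)) ∂ν| := by
        rw [integral_sub (hφ.integrable_comp_pact hα hC ν x) (hφ.integrable_comp_pact hα hC ν y)]
    _ ≤ ∫ g, C * pdelta x y ^ α * Real.exp (α * logExpansion x y g) ∂ν :=
        norm_integral_le_of_norm_le (f := fun g => φ (pact g x) - φ (pact g y))
          ((hint x y).const_mul _) (Eventually.of_forall hpt)
    _ = C * pdelta x y ^ α * mgf (logExpansion x y) ν α := integral_const_mul _ _
    _ ≤ C * pdelta x y ^ α * ρ :=
        mul_le_mul_of_nonneg_left (hρ x y) ((abs_nonneg _).trans (hφ x y))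
    _ = ρ * C * pdelta x y ^ α := by ring

end IsHolderWith

section

variable {μ : Measure (GLd d)} [IsProbabilityMeasure μ] {K : ℝ}

lemma ae_mconvN_logExpansion_mem_Icc (hd : 2 ≤ d) (hK : ∀ᵐ g ∂μ, DistortionLE K g) (n : ℕ)
    (x y : Pd d) : ∀ᵐ g ∂mconvN μ n,
      logExpansion x y g ∈ Set.Icc (-(n * (4 * Real.log K))) (n * (4 * Real.log K)) := by
  filter_upwards [ae_mconvN_distortionLE hK n] with g hg
  rw [mul_left_comm, ← Real.log_pow]
  exact abs_le.1 (hg.abs_logExpansion_le hd x y)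

lemma integrable_exp_logExpansion (hd : 2 ≤ d) (hK : ∀ᵐ g ∂μ, DistortionLE K g) (n : ℕ) (t : ℝ)
    (x y : Pd d) : Integrable (fun g => Real.exp (t * logExpansion x y g)) (mconvN μ n) :=
  ProbabilityTheory.integrable_exp_mul_of_mem_Icc (measurable_logExpansion hd x y).aemeasurable
    (ae_mconvN_logExpansion_mem_Icc hd hK n x y)

variable {α C ρ : ℝ} {φ : Pd d → ℝ} {L : ℕ}

lemma IsHolderWith.iterate_Qop_mul (hd : 2 ≤ d) (hα : 0 < α) (hC : 0 ≤ C)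
    (hφ : IsHolderWith α C φ) (hK : ∀ᵐ g ∂μ, DistortionLE K g) (hρ₀ : 0 ≤ ρ)
    (hρ : ∀ x y : Pd d, mgf (logExpansion x y) (mconvN μ L) α ≤ ρ) (k : ℕ) :
    IsHolderWith α (ρ ^ k * C) ((Qop μ)^[L * k] φ) := by
  induction k with
  | zero => simpa using hφ
  | succ k ih =>
    have hCk : 0 ≤ ρ ^ k * C := mul_nonneg (pow_nonneg hρ₀ k) hC
    rw [Nat.mul_succ, Nat.add_comm (L * k) L, Function.iterate_add_apply, pow_succ', mul_assoc,
      funext (ih.iterate_Qop_apply hα hCk μ L)]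
    exact ih.integral_comp_pact hd hα hCk (integrable_exp_logExpansion hd hK L α) hρ

lemma IsHolderWith.abs_iterate_Qop_succ_sub_le (hd : 2 ≤ d) (hα : 0 < α) (hC : 0 ≤ C)
    (hφ : IsHolderWith α C φ) (hK : ∀ᵐ g ∂μ, DistortionLE K g) (hρ₀ : 0 ≤ ρ)
    (hρ : ∀ x y : Pd d, mgf (logExpansion x y) (mconvN μ L) α ≤ ρ) (n : ℕ) (v : Pd d) :
    |(Qop μ)^[n + 1] φ v - (Qop μ)^[n] φ v| ≤ 2 * (ρ ^ (n / L) * C) := by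
  have hCk : 0 ≤ ρ ^ (n / L) * C := mul_nonneg (pow_nonneg hρ₀ _) hC
  have hψ := hφ.iterate_Qop_mul hd hα hC hK hρ₀ hρ (n / L)
  have hn : n % L + L * (n / L) = n := Nat.mod_add_div n L
  have hn' : n % L + 1 + L * (n / L) = n + 1 := by rw [add_right_comm, hn]
  have h₁ := hψ.abs_iterate_Qop_sub_le hα hCk μ (n % L + 1) v
  have h₀ := hψ.abs_iterate_Qop_sub_le hα hCk μ (n % L) v
  rw [← Function.iterate_add_apply, hn'] at h₁
  rw [← Function.iterate_add_apply, hn, abs_sub_comm] at h₀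
  rw [two_mul]
  exact (abs_sub_le _ _ _).trans (add_le_add h₁ h₀)

end

/-! ### Contraction on average -/

lemma mgf_le_exp_of_mem_Icc {Ω : Type*} [MeasurableSpace Ω] {P : Measure Ω}
    [IsProbabilityMeasure P] {X : Ω → ℝ} {B κ t : ℝ} (hX : AEMeasurable X P)
    (hB : ∀ᵐ ω ∂P, X ω ∈ Set.Icc (-B) B) (hκ : ∫ ω, X ω ∂P ≤ -κ) (ht : 0 ≤ t) :
    mgf X P t ≤ Real.exp (B ^ 2 * t ^ 2 / 2 - t * κ) := by
  have hvar : (((‖B - -B‖₊ / 2) ^ 2 : NNReal) : ℝ) = B ^ 2 := by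
    rw [NNReal.coe_pow, NNReal.coe_div, coe_nnnorm, Real.norm_eq_abs, sub_neg_eq_add, ← two_mul,
      abs_mul, NNReal.coe_two, abs_two, mul_div_cancel_left₀ _ two_ne_zero, sq_abs]
  have hoeffding := (ProbabilityTheory.hasSubgaussianMGF_of_mem_Icc hX hB).mgf_le t
  rw [hvar] at hoeffding
  calc mgf X P t = mgf (fun ω => (X ω - ∫ ω, X ω ∂P) + ∫ ω, X ω ∂P) P t := by
        simp only [sub_add_cancel]
    _ = mgf (fun ω => X ω - ∫ ω, X ω ∂P) P t * Real.exp (t * ∫ ω, X ω ∂P) :=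
        ProbabilityTheory.mgf_add_const ..
    _ ≤ Real.exp (B ^ 2 * t ^ 2 / 2) * Real.exp (t * -κ) := by gcongr
    _ = Real.exp (B ^ 2 * t ^ 2 / 2 - t * κ) := by rw [← Real.exp_add, mul_neg, sub_eq_add_neg]

lemma exists_pos_forall_mgf_le {Ω ι : Type*} [MeasurableSpace Ω] {P : Measure Ω}
    [IsProbabilityMeasure P] {X : ι → Ω → ℝ} {B κ : ℝ} (hX : ∀ i, AEMeasurable (X i) P)
    (hB : ∀ i, ∀ᵐ ω ∂P, X i ω ∈ Set.Icc (-B) B) (hκ₀ : 0 < κ) (hκ : ∀ i, ∫ ω, X i ω ∂P ≤ -κ) :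
    ∃ α : ℝ, 0 < α ∧ α ≤ 1 ∧ ∃ ρ : ℝ, 0 < ρ ∧ ρ < 1 ∧ ∀ i, mgf (X i) P α ≤ ρ := by
  obtain ⟨a, ha, haκ⟩ := exists_pos_mul_lt hκ₀ (B ^ 2)
  have hα : 0 < min a 1 := lt_min ha one_pos
  have hαa : B ^ 2 * min a 1 ≤ κ :=
    (mul_le_mul_of_nonneg_left (min_le_left a 1) (sq_nonneg B)).trans haκ.le
  refine ⟨min a 1, hα, min_le_right a 1, Real.exp (-(min a 1 * κ / 2)), Real.exp_pos _,
    Real.exp_lt_one_iff.2 (neg_lt_zero.2 (half_pos (mul_pos hα hκ₀))), fun i => ?_⟩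
  refine (mgf_le_exp_of_mem_Icc (hX i) (hB i) (hκ i) hα.le).trans (Real.exp_le_exp.2 ?_)
  linarith [mul_le_mul_of_nonneg_left hαa hα.le]

section

variable {μ : Measure (GLd d)} [IsProbabilityMeasure μ] {K : ℝ}

lemma QuasiIrreducible.eventually_forall_mul_le_integral_logStretch (hqi : QuasiIrreducible μ)
    (hK : ∀ᵐ g ∂μ, DistortionLE K g) {c : ℝ} (hc : c < L1 μ) :
    ∀ᶠ L : ℕ in atTop, ∀ v : Ed d, v ≠ 0 → c * L ≤ ∫ g, logStretch g v ∂mconvN μ L := by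
  obtain ⟨c', hcc', hc'⟩ := exists_between hc
  obtain ⟨ε, hε, hεc⟩ := exists_pos_mul_lt (sub_pos.2 hcc') (Real.log K + |c'|)
  obtain ⟨N, hN⟩ := hqi.exists_forall_measure_slowUpTo_lt hK hc' (ENNReal.ofReal_pos.2 hε)
  filter_upwards [(tendsto_natCast_atTop_atTop.const_mul_atTop (sub_pos.2 hεc)).eventually_ge_atTop
    ((Real.log K + |c'|) * N)] with L hL v hv
  linarith [le_integral_logStretch hK hε.le (fun w hw => (hN w hw).le) hv L]

lemma eventually_integral_log_N2_le (hd : 2 ≤ d) (hK : ∀ᵐ g ∂μ, DistortionLE K g) {b : ℝ}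
    (hb : L12 μ < b) : ∀ᶠ L : ℕ in atTop, ∫ g, Real.log (N2 g) ∂mconvN μ L ≤ b * L := by
  filter_upwards [(tendsto_L12 hd hK).eventually_lt_const hb, eventually_gt_atTop 0] with L hL hL₀
  rw [mul_comm]
  exact ((inv_mul_lt_iff₀ (Nat.cast_pos.2 hL₀)).1 hL).le

lemma integral_logExpansion (hd : 2 ≤ d) (hK : ∀ᵐ g ∂μ, DistortionLE K g) (x y : Pd d) (n : ℕ) :
    ∫ g, logExpansion x y g ∂mconvN μ n = ∫ g, Real.log (N2 g) ∂mconvN μ n -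
      ∫ g, logStretch g x.rep ∂mconvN μ n - ∫ g, logStretch g y.rep ∂mconvN μ n := by
  have hN : Integrable (fun g => Real.log (N2 g)) (mconvN μ n) :=
    .of_bound (measurable_N2 hd).log.aestronglyMeasurable _ (ae_mconvN_abs_log_N2_le hd hK n)
  have hx := integrable_logStretch_mconvN hK x.rep_nonzero n
  rw [← integral_sub hN hx]
  exact integral_sub (hN.sub hx) (integrable_logStretch_mconvN hK y.rep_nonzero n)

lemma QuasiIrreducible.exists_forall_integral_logExpansion_le (hqi : QuasiIrreducible μ)
    (hd : 2 ≤ d) (hK : ∀ᵐ g ∂μ, DistortionLE K g) (hgap : L2 μ < L1 μ) :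
    ∃ L : ℕ, 0 < L ∧ ∃ κ : ℝ, 0 < κ ∧
      ∀ x y : Pd d, ∫ g, logExpansion x y g ∂mconvN μ L ≤ -κ := by
  obtain ⟨b, hLb, hb⟩ : ∃ b, L12 μ < b ∧ b < 2 * L1 μ :=
    exists_between (by rw [L2] at hgap; linarith)
  obtain ⟨c, hbc, hc⟩ : ∃ c, b / 2 < c ∧ c < L1 μ := exists_between (by linarith)
  obtain ⟨L, hlower, hupper, hL⟩ :=
    ((hqi.eventually_forall_mul_le_integral_logStretch hK hc).and
      ((eventually_integral_log_N2_le hd hK hLb).and (eventually_gt_atTop 0))).exists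
  refine ⟨L, hL, (2 * c - b) * L, mul_pos (by linarith) (Nat.cast_pos.2 hL), fun x y => ?_⟩
  rw [integral_logExpansion hd hK]
  linarith [hlower x.rep x.rep_nonzero, hlower y.rep y.rep_nonzero]

lemma QuasiIrreducible.exists_forall_mgf_logExpansion_le (hqi : QuasiIrreducible μ)
    (hd : 2 ≤ d) (hK : ∀ᵐ g ∂μ, DistortionLE K g) (hgap : L2 μ < L1 μ) :
    ∃ L : ℕ, 0 < L ∧ ∃ α : ℝ, 0 < α ∧ α ≤ 1 ∧ ∃ ρ : ℝ, 0 < ρ ∧ ρ < 1 ∧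
      ∀ x y : Pd d, mgf (logExpansion x y) (mconvN μ L) α ≤ ρ := by
  obtain ⟨L, hL, κ, hκ₀, hκ⟩ := hqi.exists_forall_integral_logExpansion_le hd hK hgap
  obtain ⟨α, hα, hα', ρ, hρ, hρ', h⟩ := exists_pos_forall_mgf_le
    (X := fun p : Pd d × Pd d => logExpansion p.1 p.2)
    (fun p => (measurable_logExpansion hd p.1 p.2).aemeasurable)
    (fun p => ae_mconvN_logExpansion_mem_Icc hd hK L p.1 p.2) hκ₀ fun p => hκ p.1 p.2
  exact ⟨L, hL, α, hα, hα', ρ, hρ, hρ', fun x y => h (x, y)⟩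

lemma abs_mgf_logExpansion_sub_le (hd : 2 ≤ d) {ν : Measure (GLd d)} [IsProbabilityMeasure ν]
    (hμ : ∀ᵐ g ∂μ, DistortionLE K g) (hν : ∀ᵐ g ∂ν, DistortionLE K g) {α : ℝ} (hα : 0 ≤ α)
    (n : ℕ) (x y : Pd d) :
    |mgf (logExpansion x y) (mconvN μ n) α - mgf (logExpansion x y) (mconvN ν n) α| ≤
      n * (Real.exp (α * (n * (4 * Real.log K))) * tvDist μ ν) := by
  have hbound {m : Measure (GLd d)} [IsProbabilityMeasure m] (hm : ∀ᵐ g ∂m, DistortionLE K g) :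
      ∀ᵐ g ∂mconvN m n, |Real.exp (α * logExpansion x y g)| ≤
        Real.exp (α * (n * (4 * Real.log K))) := by
    filter_upwards [ae_mconvN_logExpansion_mem_Icc hd hm n x y] with g hg
    rw [Real.abs_exp]
    gcongr
    exact hg.2
  exact abs_integral_mconvN_sub_le_of_ae ((measurable_logExpansion hd x y).const_mul α).exp
    (hbound hμ) (hbound hν)

lemma QuasiIrreducible.exists_forall_tvDist_lt_mgf_logExpansion_le (hqi : QuasiIrreducible μ)
    (hd : 2 ≤ d) (hK : ∀ᵐ g ∂μ, DistortionLE K g) (hgap : L2 μ < L1 μ) :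
    ∃ L : ℕ, 0 < L ∧ ∃ α : ℝ, 0 < α ∧ α ≤ 1 ∧ ∃ ρ : ℝ, 0 < ρ ∧ ρ < 1 ∧ ∃ ε : ℝ, 0 < ε ∧
      ∀ (ν : Measure (GLd d)) [IsProbabilityMeasure ν], (∀ᵐ g ∂ν, DistortionLE K g) →
        tvDist ν μ < ε → ∀ x y : Pd d, mgf (logExpansion x y) (mconvN ν L) α ≤ ρ := by
  obtain ⟨L, hL, α, hα, hα', ρ, hρ, hρ', hmgf⟩ := hqi.exists_forall_mgf_logExpansion_le hd hK hgap
  obtain ⟨ρ', hρρ', hρ'₁⟩ := exists_between hρ'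
  obtain ⟨ε, hε, hερ⟩ := exists_pos_mul_lt (sub_pos.2 hρρ')
    (L * Real.exp (α * (L * (4 * Real.log K))))
  refine ⟨L, hL, α, hα, hα', ρ', hρ.trans hρρ', hρ'₁, ε, hε, fun ν _ hν htv x y => ?_⟩
  have hclose := (le_abs_self _).trans (abs_mgf_logExpansion_sub_le hd hν hK hα.le L x y)
  have hsmall : L * (Real.exp (α * (L * (4 * Real.log K))) * tvDist ν μ) ≤ ρ' - ρ := by
    rw [← mul_assoc]
    exact (mul_le_mul_of_nonneg_left htv.le (by positivity)).trans hερ.le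
  linarith [hmgf x y]

end

lemma pow_div_le_inv_mul_rpow {ρ : ℝ} (hρ₀ : 0 < ρ) (hρ₁ : ρ ≤ 1) (L n : ℕ) :
    ρ ^ (n / L) ≤ ρ⁻¹ * (ρ ^ (-(1 / L : ℝ))) ^ (-(n : ℝ)) := by
  have hdiv : (n : ℝ) / L ≤ (n / L : ℕ) + 1 := by
    rw [← Nat.floor_div_eq_div (K := ℝ)]
    exact (Nat.lt_floor_add_one _).le
  rw [← Real.rpow_mul hρ₀.le, ← Real.rpow_neg_one, ← Real.rpow_add hρ₀, ← Real.rpow_natCast,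
    neg_mul_neg, one_div_mul_eq_div]
  exact Real.rpow_le_rpow_of_exponent_ge hρ₀ hρ₁ (by linarith)

theorem cauchy_iterates_markov_operator
    (d : ℕ) (hd : 2 ≤ d) (S : Set (GLd d)) (hS : IsCompact S)
    (μ₀ : Measure (GLd d)) [IsProbabilityMeasure μ₀] (hμ₀S : μ₀ Sᶜ = 0)
    (hqi : QuasiIrreducible μ₀) (hgap : L2 μ₀ < L1 μ₀) :
    ∃ C : ℝ, 0 < C ∧ ∃ θ : ℝ, 1 < θ ∧ ∃ ε : ℝ, 0 < ε ∧
      ∀ (μ : Measure (GLd d)) [IsProbabilityMeasure μ], μ Sᶜ = 0 →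
        tvDist μ μ₀ < ε → ∀ n : ℕ, 1 ≤ n → ∀ v : Pd d,
          |(Qop μ)^[n + 1] (phiObs μ) v - (Qop μ)^[n] (phiObs μ) v| ≤
            C * θ ^ (-(n : ℝ)) := by
  obtain ⟨K, hK₁, hKS⟩ := exists_forall_mem_distortionLE hS
  have hK {μ : Measure (GLd d)} (hμ : μ Sᶜ = 0) : ∀ᵐ g ∂μ, DistortionLE K g :=
    mem_of_superset (mem_ae_iff.2 hμ) hKS
  obtain ⟨L, hL, α, hα, hα₁, ρ, hρ, hρ₁, ε, hε, hmgf⟩ :=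
    hqi.exists_forall_tvDist_lt_mgf_logExpansion_le hd (hK hμ₀S) hgap
  have hθ : 1 < ρ ^ (-(1 / L : ℝ)) :=
    Real.one_lt_rpow_of_pos_of_lt_one_of_neg hρ hρ₁ (neg_lt_zero.2 (by positivity))
  refine ⟨2 * (2 * K ^ 2) * ρ⁻¹, by positivity, _, hθ, ε, hε, fun μ _ hμ htv n _ v => ?_⟩
  calc |(Qop μ)^[n + 1] (phiObs μ) v - (Qop μ)^[n] (phiObs μ) v|
      ≤ 2 * (ρ ^ (n / L) * (2 * K ^ 2)) :=
        (isHolderWith_phiObs (hK hμ) hα₁).abs_iterate_Qop_succ_sub_le hd hα (by positivity) (hK hμ)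
          hρ.le (hmgf μ (hK hμ) htv) n v
    _ ≤ 2 * (ρ⁻¹ * (ρ ^ (-(1 / L : ℝ))) ^ (-(n : ℝ)) * (2 * K ^ 2)) := by
        gcongr
        exact pow_div_le_inv_mul_rpow hρ hρ₁.le L n
    _ = 2 * (2 * K ^ 2) * ρ⁻¹ * (ρ ^ (-(1 / L : ℝ))) ^ (-(n : ℝ)) := by ring

end
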